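/- arXiv:2211.01220 — 4 statements merged into one kernel-verified Lean document; each statement's English description precedes it below -/
import Mathlib

section
/- For every K ≥ 1 there exist a prime power q, a finite probability space, and jointly distributed random variables (Z_k)_{k∈[K]} and (Z_k^n)_{n∈[K],k∈[K]} such that: (i) each Z_k^n is a deterministic function of Z_k (so H(Z_k^1,…,Z_k^K | Z_k) = 0); (ii) H(Z_k^n) = L for all n, k ∈ [K], where L = K!·log₂ q bits; (iii) for every n ∈ [K] the family (Z_1^n, …, Z_K^n) is (K,n)-MDS with symbol size L; and (iv) each Z_k takes values in F_q^{Σ_{n∈[K]} K!/n}, i.e., Z_k has size L_Z = (Σ_{n∈[K]} 1/n)·K!·log₂ q bits. Consequently the rate R_Z = L_Z/L = 1 + 1/2 + ⋯ + 1/K is achievable for K-user MDS variable generation (achievability part of Theorem 1). -/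
/-!
The scheme is linear with generically chosen coefficients. Take `K` independent pools of `K!` uniform
symbols of `F`. For each `m ∈ [K]`, user `k` stores in `Z_k` some `K!/m` linear combinations of the
symbols of pool `m`, and `Z_k^n` consists of `K!` linear combinations of those coordinates of `Z_k`
that come from the pools `1, …, n`.

Fix `n` and a set of `n` users. Their variables `Z_k^n` have `n·K!` symbols altogether, as many as
the pools `1, …, n`, so a square matrix relates the two; write `D` for its determinant, an integer
polynomial in the coefficients of the scheme. If `D ≠ 0`, these `n` variables are independent and
uniform and determine the first `n` pools, hence determine every other `Z_k^n`. If this holds for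
all sets of `n` users, the family is `(K,n)`-MDS (`finrank_range_joint`). Entropies of linear
functions of a uniform vector are ranks times `log₂ q` (`Hent_linear`).

No polynomial `D` vanishes identically, over any field: since `K!/n ≤ K!/m` for `m ≤ n`, the `j`-th
of the `n` users can store the `j`-th of `n` equal blocks of each pool `m ≤ n` and output these
blocks, so that the matrix is a permutation matrix (`exists_coeffMatrix_det_ne_zero`). The product
of these finitely many polynomials therefore has a non-root over every field whose cardinality
exceeds its degree (`exists_prime_eval_ne_zero`), and such a non-root serves all `n` and all sets of
users simultaneously.
-/

open scoped BigOperators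

open Classical in
/-- The probability that the finitely-valued random variable `X` takes the value `s`,
under the probability weights `μ` on the finite sample space `Ω`. -/
noncomputable def probOf {Ω S : Type*} [Fintype Ω] (μ : Ω → ℝ) (X : Ω → S) (s : S) : ℝ :=
  ∑ ω ∈ Finset.univ.filter (fun ω => X ω = s), μ ω

/-- Shannon entropy (in bits) of a finitely-valued random variable. -/
noncomputable def Hent {Ω S : Type*} [Fintype Ω] [Fintype S] (μ : Ω → ℝ) (X : Ω → S) : ℝ :=
  - ∑ s : S, probOf μ X s * Real.logb 2 (probOf μ X s)

/-- Conditional entropy H(X | Y) (in bits). -/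
noncomputable def Hcond {Ω S T : Type*} [Fintype Ω] [Fintype S] [Fintype T]
    (μ : Ω → ℝ) (X : Ω → S) (Y : Ω → T) : ℝ :=
  Hent μ (fun ω => (X ω, Y ω)) - Hent μ Y

/-- Mutual information I(X ; Y) (in bits). -/
noncomputable def MI {Ω S T : Type*} [Fintype Ω] [Fintype S] [Fintype T]
    (μ : Ω → ℝ) (X : Ω → S) (Y : Ω → T) : ℝ :=
  Hent μ X + Hent μ Y - Hent μ (fun ω => (X ω, Y ω))

/-- Conditional mutual information I(X ; Y | Z) (in bits). -/
noncomputable def CMI {Ω S T U : Type*} [Fintype Ω] [Fintype S] [Fintype T] [Fintype U]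
    (μ : Ω → ℝ) (X : Ω → S) (Y : Ω → T) (Z : Ω → U) : ℝ :=
  Hcond μ X Z - Hcond μ X (fun ω => (Y ω, Z ω))

/-! ### Entropy of linear images of a uniform vector -/

/-- A linear map applied to a uniformly distributed vector is uniform on its range, because all
its nonempty fibres are cosets of the kernel; hence its entropy is its rank times `log₂ |F|`. -/
theorem Hent_linear {F V W : Type} [Field F] [Fintype F] [AddCommGroup V] [Module F V]
    [AddCommGroup W] [Module F W] [Fintype V] [Fintype W] {N : ℕ} (e : Fin N ≃ V)
    (T : V →ₗ[F] W) :
    Hent (fun _ : Fin N => (1 : ℝ) / N) (fun ω => T (e ω)) =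
      (Module.finrank F (LinearMap.range T) : ℝ) * Real.logb 2 (Fintype.card F) := by
  classical
  set μ : Fin N → ℝ := fun _ => (1 : ℝ) / N
  set X : Fin N → W := fun ω => T (e ω)
  have hN : (N : ℝ) ≠ 0 := by
    have : N ≠ 0 := by
      rintro rfl
      exact (e.symm 0).elim0
    exact_mod_cast this
  have hp : ∀ s, probOf μ X s =
      ((Finset.univ.filter fun v : V => T v = s).card : ℝ) * (1 / N) := by
    intro s
    have hc : (Finset.univ.filter fun ω => X ω = s).card =
        (Finset.univ.filter fun v : V => T v = s).card :=
      Finset.card_equiv e (by simp [X])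
    rw [← hc]
    simp only [probOf, μ, Finset.sum_const, nsmul_eq_mul]
  have htot : ∑ s, probOf μ X s = 1 := by
    simp only [hp, ← Finset.sum_mul]
    rw [← Nat.cast_sum, ← Finset.card_eq_sum_card_fiberwise (s := Finset.univ) (f := T)
      (fun _ _ => Finset.mem_coe.2 (Finset.mem_univ _)), Finset.card_univ, ← Fintype.card_congr e, Fintype.card_fin]
    field_simp
  have hin : ∀ s ∈ LinearMap.range T, probOf μ X s = probOf μ X 0 := by
    intro s hs
    rw [hp, hp]
    congr 2
    exact AddMonoidHom.card_fiber_eq_of_mem_range T.toAddMonoidHom (x := s) (y := 0)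
      hs ⟨0, map_zero _⟩
  have hout : ∀ s ∉ LinearMap.range T, probOf μ X s = 0 := by
    intro s hs
    rw [hp, Finset.filter_false_of_mem]
    · simp
    · exact fun v _ h => hs ⟨v, h⟩
  set R := Finset.univ.filter fun s => s ∈ LinearMap.range T
  have hsplit : ∀ f : ℝ → ℝ, f 0 = 0 →
      ∑ s, f (probOf μ X s) = (R.card : ℝ) * f (probOf μ X 0) := by
    intro f hf
    rw [← Finset.sum_subset (Finset.subset_univ R), Finset.sum_congr rfl
      (g := fun _ => f (probOf μ X 0)), Finset.sum_const, nsmul_eq_mul]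
    · intro s hs
      rw [hin s (by simpa [R] using hs)]
    · intro s _ hs
      rw [hout s (by simpa [R] using hs), hf]
  have h1 : (R.card : ℝ) * probOf μ X 0 = 1 := by
    rw [← htot]; exact (hsplit id rfl).symm
  have hR : R.card = Fintype.card F ^ Module.finrank F (LinearMap.range T) := by
    rw [← Module.card_eq_pow_finrank (K := F) (V := LinearMap.range T)]
    exact (Fintype.card_subtype _).symm
  have hp0 : probOf μ X 0 = (R.card : ℝ)⁻¹ := eq_inv_of_mul_eq_one_right h1
  rw [Hent, hsplit (fun p => p * Real.logb 2 p) (by simp), ← mul_assoc, h1, hp0, Real.logb_inv, hR]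
  simp [Real.logb_pow]

/-! ### Simultaneous nonvanishing over a large finite field -/

/-- Integer polynomials, none of which vanishes identically as a function over any field, have a
common non-root over every field with `q` elements, for a suitable prime `q`. Working over `ℤ`
gives one degree bound for their product that is valid whatever the field is. -/
theorem exists_prime_eval_ne_zero {ι σ : Type} [Fintype ι] [Finite σ]
    (P : ι → MvPolynomial σ ℤ)
    (h : ∀ (i : ι) (F : Type) [Field F], ∃ x : σ → F, MvPolynomial.aeval x (P i) ≠ 0) :
    ∃ q : ℕ, q.Prime ∧ ∀ (F : Type) [Field F] [Fintype F], Fintype.card F = q →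
      ∃ x : σ → F, ∀ i, MvPolynomial.aeval x (P i) ≠ 0 := by
  classical
  obtain ⟨q, hq, hqp⟩ := Nat.exists_infinite_primes ((∏ i, P i).totalDegree + 1)
  refine ⟨q, hqp, fun F _ _ hF => ?_⟩
  by_contra! hcon
  have heval : ∀ (x : σ → F) (Q : MvPolynomial σ ℤ),
      MvPolynomial.eval x (MvPolynomial.map (algebraMap ℤ F) Q) = MvPolynomial.aeval x Q := by
    intro x Q
    rw [MvPolynomial.eval_map, MvPolynomial.aeval_def]
  have hzero : MvPolynomial.map (algebraMap ℤ F) (∏ i, P i) = 0 := by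
    refine MvPolynomial.eq_zero_of_eval_zero_at_prod_finset _ (fun _ => Finset.univ) ?_ ?_
    · intro s
      rw [Finset.card_univ, hF]
      refine lt_of_le_of_lt ?_ (Nat.lt_of_succ_le hq)
      refine le_trans ?_ (MvPolynomial.degreeOf_le_totalDegree _ s)
      rw [MvPolynomial.degreeOf_def, MvPolynomial.degreeOf_def]
      exact Multiset.count_le_of_le _ MvPolynomial.degrees_map_le
    · intro x _
      obtain ⟨i, hi⟩ := hcon x
      rw [heval, map_prod]
      exact Finset.prod_eq_zero (Finset.mem_univ i) hi
  rw [map_prod, Finset.prod_eq_zero_iff] at hzero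
  obtain ⟨i, -, hi⟩ := hzero
  obtain ⟨x, hx⟩ := h i F
  exact hx (by rw [← heval, hi, map_zero])

/-! ### The coefficient matrices -/

/-- Coordinates of the variable `Z_k`. Pool `m : Fin K` (zero-based) contributes
`K! / (m + 1)` of them. -/
abbrev Slot (K : ℕ) : Type := Σ m : Fin K, Fin (K.factorial / (m.1 + 1))

/-- The first `n + 1` pools; the zero-based `n : Fin K` stands for the MDS parameter `n + 1`. -/
abbrev Upto {K : ℕ} (n : Fin K) : Type := {m : Fin K // m ≤ n}

/-- Coefficients of the linear scheme. `Sum.inl (k, s, p)` is the coefficient, in the coordinate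
`s` of `Z_k`, of the `p`-th symbol of the pool of `s`. `Sum.inr (n, k, i, s)` is the coefficient
of the coordinate `s` of `Z_k` in the `i`-th symbol of `Z_k^n`; it is used only if the pool of `s`
is at most `n`. -/
abbrev Par (K : ℕ) : Type :=
  (Fin K × Slot K × Fin K.factorial) ⊕ (Fin K × Fin K × Fin K.factorial × Slot K)

theorem card_Upto {K : ℕ} (n : Fin K) : Fintype.card (Upto n) = n.1 + 1 := by
  rw [← Fin.card_Iic, Fintype.card_subtype]
  congr 1
  ext; simp

/-- The square matrix expressing the symbols `Z_{b a}^n`, for `a` in `Upto n`, through the symbols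
of the pools up to `n`. The embedding `b` lists `n + 1` distinct users. -/
def coeffMatrix {K : ℕ} {S : Type} [CommRing S] (x : Par K → S) (n : Fin K)
    (b : Upto n ↪ Fin K) :
    Matrix (Upto n × Fin K.factorial) (Upto n × Fin K.factorial) S :=
  fun r c => ∑ j : Fin (K.factorial / (c.1.1.1 + 1)),
    x (.inr (n, b r.1, r.2, ⟨c.1.1, j⟩)) * x (.inl (b r.1, ⟨c.1.1, j⟩, c.2))

/-- The determinant is not identically zero: there is a choice of coefficients that makes the
matrix a permutation matrix. Each pool is cut into `n + 1` blocks of `K! / (n + 1)` symbols, user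
`b a` stores the block `a` of every pool up to `n`, and it outputs these `n + 1` blocks as its
`K!` symbols. -/
theorem exists_coeffMatrix_det_ne_zero {K : ℕ} (n : Fin K) (b : Upto n ↪ Fin K)
    (F : Type) [Field F] : ∃ x : Par K → F, (coeffMatrix x n b).det ≠ 0 := by
  classical
  have hdvd : n.1 + 1 ∣ K.factorial := Nat.dvd_factorial (Nat.succ_pos _) n.2
  obtain ⟨e⟩ : Nonempty (Fin K.factorial ≃ Upto n × Fin (K.factorial / (n.1 + 1))) := by
    rw [← Fintype.card_eq]
    simp [card_Upto, Nat.mul_div_cancel' hdvd]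
  -- `e p` is the pair (block index, position within the block) of the index `p`.
  let x : Par K → F := Sum.elim
    (fun g => if g.1 = b (e g.2.2).1 ∧ (e g.2.2).2.1 = g.2.1.2.1 then 1 else 0)
    (fun v => if (e v.2.2.1).1.1 = v.2.2.2.1 ∧ (e v.2.2.1).2.1 = v.2.2.2.2.1 then 1 else 0)
  let f : Upto n × Fin K.factorial → Upto n × Fin K.factorial :=
    fun r => ((e r.2).1, e.symm (r.1, (e r.2).2))
  have hf : Function.Involutive f := fun r => by simp [f]
  have hx : coeffMatrix x n b = (1 : Matrix _ _ F).submatrix (Function.Involutive.toPerm f hf) id := by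
    ext ⟨a, i⟩ ⟨m, p⟩
    -- A block fits into the `K! / (m + 1)` coordinates available for pool `m`, as `m ≤ n`.
    have hle : K.factorial / (n.1 + 1) ≤ K.factorial / (m.1.1 + 1) :=
      Nat.div_le_div_left (Nat.succ_le_succ m.2) (Nat.succ_pos _)
    have key : ((Function.Involutive.toPerm f hf) (a, i) = (m, p)) ↔
        ((e i).1 = m ∧ a = (e p).1 ∧ (e i).2 = (e p).2) := by
      simp only [Function.Involutive.coe_toPerm, f, Prod.mk.injEq, Equiv.symm_apply_eq]
      rw [Prod.ext_iff]
    simp only [coeffMatrix, Matrix.submatrix_apply, id, Matrix.one_apply, key]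
    rw [Finset.sum_eq_single (⟨(e i).2.1, (e i).2.2.trans_le hle⟩ : Fin _)]
    · simp only [x, Sum.elim_inl, Sum.elim_inr, and_true, ← ite_and, mul_ite, mul_one, mul_zero, Fin.ext_iff]
      congr 1
      grind
    · intro j _ hj
      have : ¬ (e i).2.1 = j.1 := fun h => hj (Fin.ext h.symm)
      simp [x, this]
    · simp
  refine ⟨x, ?_⟩
  rw [hx, Matrix.det_permute, Matrix.det_one, mul_one]
  rcases Int.units_eq_one_or (Equiv.Perm.sign (Function.Involutive.toPerm f hf)) with h | h <;> simp [h]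

theorem aeval_coeffMatrix_det {K : ℕ} {F : Type} [Field F] (x : Par K → F) (n : Fin K)
    (b : Upto n ↪ Fin K) :
    MvPolynomial.aeval x (coeffMatrix (MvPolynomial.X (R := ℤ)) n b).det =
      (coeffMatrix x n b).det := by
  rw [AlgHom.map_det]
  congr 1
  ext r c
  simp [coeffMatrix]

/-! ### The linear scheme and its ranks -/

section Maps

variable {K : ℕ} {F : Type} [Field F] (x : Par K → F)

/-- The variable `Z_k` as a linear function of the pools, each consisting of `K!` symbols. -/
def share (k : Fin K) : (Fin K → Fin K.factorial → F) →ₗ[F] (Slot K → F) where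
  toFun v s := ∑ p, x (.inl (k, s, p)) * v s.1 p
  map_add' v w := by ext s; simp [mul_add, Finset.sum_add_distrib]
  map_smul' c v := by ext s; simp [Finset.mul_sum, mul_left_comm]

/-- The function computing `Z_k^n` from `Z_k`. -/
def extract (n k : Fin K) : (Slot K → F) →ₗ[F] (Fin K.factorial → F) where
  toFun z i := ∑ m : Upto n, ∑ j : Fin (K.factorial / (m.1.1 + 1)),
    x (.inr (n, k, i, ⟨m.1, j⟩)) * z ⟨m.1, j⟩
  map_add' v w := by ext s; simp [mul_add, Finset.sum_add_distrib]
  map_smul' c v := by ext s; simp [Finset.mul_sum, mul_left_comm]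

/-- The variable `Z_k^n` as a linear function of the pools. -/
def symb (n k : Fin K) : (Fin K → Fin K.factorial → F) →ₗ[F] (Fin K.factorial → F) :=
  extract x n k ∘ₗ share x k

theorem symb_eq_mulVec (n : Fin K) (b : Upto n ↪ Fin K) (v : Fin K → Fin K.factorial → F)
    (a : Upto n) (i : Fin K.factorial) :
    symb x n (b a) v i = (coeffMatrix x n b).mulVec (fun c => v c.1.1 c.2) (a, i) := by
  simp only [symb, extract, share, LinearMap.comp_apply, LinearMap.coe_mk, AddHom.coe_mk,
    coeffMatrix, Matrix.mulVec, dotProduct, Fintype.sum_prod_type, Finset.mul_sum, Finset.sum_mul]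
  refine Finset.sum_congr rfl fun m _ => ?_
  rw [Finset.sum_comm]
  simp only [mul_assoc]

variable {x} {n : Fin K}

/-- The family of the variables `Z_{g a}^n`, as a linear function of the pools. -/
def joint (x : Par K → F) (n : Fin K) {ι : Type} (g : ι → Fin K) :
    (Fin K → Fin K.factorial → F) →ₗ[F] (ι → Fin K.factorial → F) :=
  LinearMap.pi fun a => symb x n (g a)

theorem joint_surjective (b : Upto n ↪ Fin K) (hdet : (coeffMatrix x n b).det ≠ 0) :
    Function.Surjective (joint x n b) := by
  intro y
  have hu : IsUnit (coeffMatrix x n b) :=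
    (Matrix.isUnit_iff_isUnit_det _).2 (isUnit_iff_ne_zero.2 hdet)
  obtain ⟨w, hw⟩ := Matrix.mulVec_surjective_iff_isUnit.2 hu (fun c => y c.1 c.2)
  refine ⟨fun m p => if h : m ≤ n then w (⟨m, h⟩, p) else 0, ?_⟩
  ext a i
  have hv : (fun c : Upto n × Fin K.factorial =>
      (if h : c.1.1 ≤ n then w (⟨c.1.1, h⟩, c.2) else 0)) = w := by
    ext c; rw [dif_pos c.1.2]
  rw [joint, LinearMap.pi_apply, symb_eq_mulVec, hv, hw]

/-- Any `n + 1` of the variables `Z_1^n, …, Z_K^n` determine the pools up to `n`, hence also all the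
remaining ones. -/
theorem symb_eq_zero_of_joint (b : Upto n ↪ Fin K) (hdet : (coeffMatrix x n b).det ≠ 0)
    {v : Fin K → Fin K.factorial → F} (hv : joint x n b v = 0) (k : Fin K) :
    symb x n k v = 0 := by
  have hu : IsUnit (coeffMatrix x n b) :=
    (Matrix.isUnit_iff_isUnit_det _).2 (isUnit_iff_ne_zero.2 hdet)
  have h0 : (fun c : Upto n × Fin K.factorial => v c.1.1 c.2) = 0 := by
    apply Matrix.mulVec_injective_iff_isUnit.2 hu
    rw [Matrix.mulVec_zero]
    ext ⟨a, i⟩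
    rw [← symb_eq_mulVec]
    exact congrFun (congrFun hv a) i
  have hz : ∀ (m : Upto n) p, v m.1 p = 0 := fun m p => congrFun h0 (m, p)
  ext i
  simp [symb, extract, share, hz]

/-- The MDS property in terms of ranks. At most `n + 1` users can be completed to exactly `n + 1`,
so the joint map is surjective; the joint map of more users has the same kernel as that of any
`n + 1` among them. -/
theorem finrank_range_joint
    (hdet : ∀ b : Upto n ↪ Fin K, (coeffMatrix x n b).det ≠ 0) (U : Finset (Fin K)) :
    Module.finrank F (LinearMap.range (joint x n (fun u : U => u.1))) =
      min U.card (n.1 + 1) * K.factorial := by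
  classical
  have emb : ∀ t : Finset (Fin K), t.card = n.1 + 1 →
      ∃ b : Upto n ↪ Fin K, ∀ k, k ∈ t ↔ ∃ a, b a = k := by
    intro t ht
    obtain ⟨e⟩ : Nonempty (Upto n ≃ t) := by
      rw [← Fintype.card_eq, card_Upto, Fintype.card_coe, ht]
    refine ⟨e.toEmbedding.trans (Function.Embedding.subtype _), fun k => ⟨fun hk => ?_, ?_⟩⟩
    · exact ⟨e.symm ⟨k, hk⟩, by simp⟩
    · rintro ⟨a, rfl⟩
      exact (e a).2
  rcases le_total U.card (n.1 + 1) with hU | hU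
  · obtain ⟨t, hUt, -, ht⟩ := Finset.exists_subsuperset_card_eq (Finset.subset_univ U) hU
      (by simp)
    obtain ⟨b, hb⟩ := emb t ht
    have hsurj : Function.Surjective (joint x n (fun u : U => u.1)) := by
      intro y
      obtain ⟨v, hv⟩ := joint_surjective b (hdet b)
        (fun a => if h : b a ∈ U then y ⟨b a, h⟩ else 0)
      refine ⟨v, ?_⟩
      funext u
      obtain ⟨a, ha⟩ := (hb u.1).1 (hUt u.2)
      have := congrFun hv a
      simp only [joint, LinearMap.pi_apply, ha] at this ⊢
      simpa using this
    rw [LinearMap.range_eq_top.2 hsurj, finrank_top, min_eq_left hU]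
    simp [Module.finrank_pi_fintype]
  · obtain ⟨t, htU, ht⟩ := Finset.exists_subset_card_eq hU
    obtain ⟨b, hb⟩ := emb t ht
    have hker : LinearMap.ker (joint x n (fun u : U => u.1)) = LinearMap.ker (joint x n b) := by
      ext v
      rw [LinearMap.mem_ker, LinearMap.mem_ker]
      constructor
      · intro h
        funext a
        exact congrFun h ⟨b a, htU ((hb _).2 ⟨a, rfl⟩)⟩
      · intro h
        funext u
        exact symb_eq_zero_of_joint b (hdet b) h u.1
    have h1 := LinearMap.finrank_range_add_finrank_ker (joint x n (fun u : U => u.1))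
    have h2 := LinearMap.finrank_range_add_finrank_ker (joint x n b)
    rw [LinearMap.range_eq_top.2 (joint_surjective b (hdet b)), finrank_top] at h2
    have h3 : Module.finrank F (Upto n → Fin K.factorial → F) = (n.1 + 1) * K.factorial := by
      rw [Module.finrank_pi_fintype]
      simp only [Module.finrank_fin_fun, Finset.sum_const, Finset.card_univ, card_Upto, smul_eq_mul]
    rw [hker] at h1
    rw [min_eq_right hU]
    omega

end Maps

/-- Achievability part of Theorem 1 (MDS variable generation): the rate
R_Z = 1 + 1/2 + ⋯ + 1/K is achievable.  There is a prime power `q` such that, over the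
field with `q` elements, one can build a finite probability space and variables
`Z_k` (valued in `F_q^{Σ_{n∈[K]} K!/n}`) and `Z_k^n` (each of entropy `L = K!·log₂ q`) with
each `Z_k^n` a deterministic function of `Z_k` and, for each `n`, `(Z_1^n,…,Z_K^n)`
being (K,n)-MDS with symbol size `L`. -/
theorem mds_variable_generation_achievability (K : ℕ) (hK : 1 ≤ K) :
    ∃ q : ℕ, IsPrimePow q ∧
      ∀ (F : Type) [Field F] [Fintype F], Fintype.card F = q →
        ∃ (N : ℕ) (μ : Fin N → ℝ),
          (∀ ω, 0 ≤ μ ω) ∧ (∑ ω, μ ω) = 1 ∧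
          ∃ (Z : Fin K → Fin N → (Fin (∑ n ∈ Finset.range K, K.factorial / (n + 1)) → F))
            (ZM : Fin K → Fin K → Fin N → (Fin K.factorial → F)),
            -- (i) each Z_k^n is a deterministic function of Z_k
            (∀ n k : Fin K, ∃ f : (Fin (∑ n ∈ Finset.range K, K.factorial / (n + 1)) → F) →
                (Fin K.factorial → F), ∀ ω, ZM n k ω = f (Z k ω)) ∧
            -- (ii) H(Z_k^n) = L = K!·log₂ q bits
            (∀ n k : Fin K, Hent μ (ZM n k) = (K.factorial : ℝ) * Real.logb 2 q) ∧
            -- (iii) for every n, (Z_1^n, …, Z_K^n) is (K,n)-MDS with symbol size L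
            (∀ (n : Fin K) (U : Finset (Fin K)),
              Hent μ (fun ω (u : ↥U) => ZM n u.1 ω)
                = (min U.card (n.1 + 1) : ℕ) * ((K.factorial : ℝ) * Real.logb 2 q)) ∧
            -- consequently L_Z = (1 + 1/2 + ⋯ + 1/K)·K!·log₂ q bits, i.e. R_Z = Σ_{n∈[K]} 1/n
            ((∑ n ∈ Finset.range K, K.factorial / (n + 1) : ℕ) : ℝ)
              = (∑ n ∈ Finset.range K, 1 / ((n : ℝ) + 1)) * (K.factorial : ℝ) := by
  classical
  obtain ⟨q, hq, hgood⟩ := exists_prime_eval_ne_zero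
    (fun i : Σ n : Fin K, (Upto n ↪ Fin K) =>
      (coeffMatrix (MvPolynomial.X (R := ℤ)) i.1 i.2).det) (by
    intro i F _
    obtain ⟨x, hx⟩ := exists_coeffMatrix_det_ne_zero i.1 i.2 F
    exact ⟨x, by rwa [aeval_coeffMatrix_det]⟩)
  refine ⟨q, hq.isPrimePow, fun F _ _ hF => ?_⟩
  obtain ⟨x, hx⟩ := hgood F hF
  have hdet : ∀ (n : Fin K) (b : Upto n ↪ Fin K), (coeffMatrix x n b).det ≠ 0 := fun n b => by
    rw [← aeval_coeffMatrix_det]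
    exact hx ⟨n, b⟩
  obtain ⟨e₂⟩ : Nonempty (Fin (∑ n ∈ Finset.range K, K.factorial / (n + 1)) ≃ Slot K) := by
    rw [← Fintype.card_eq]
    simp [Finset.sum_range]
  let e := (Fintype.equivFin (Fin K → Fin K.factorial → F)).symm
  refine ⟨_, fun _ => 1 / (Fintype.card (Fin K → Fin K.factorial → F) : ℝ),
    fun _ => by positivity, ?_, fun k ω d => share x k (e ω) (e₂ d),
    fun n k ω => symb x n k (e ω), ?_, ?_, ?_, ?_⟩
  · rw [Finset.sum_const, Finset.card_univ, Fintype.card_fin, nsmul_eq_mul]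
    have : (Fintype.card (Fin K → Fin K.factorial → F) : ℝ) ≠ 0 := by
      exact_mod_cast Fintype.card_ne_zero
    field_simp
  · intro n k
    refine ⟨fun z => extract x n k (z ∘ e₂.symm), fun ω => ?_⟩
    simp only [symb, LinearMap.comp_apply]
    congr 1
    funext s
    simp
  · intro n k
    have hsurj : Function.Surjective (symb x n k) := by
      intro y
      obtain ⟨c, a, ha⟩ : ∃ (c : Upto n ↪ Fin K) (a : Upto n), c a = k :=
        -- The list of users `0, …, n` with `n` and `k` interchanged contains `k`.
        ⟨(Function.Embedding.subtype _).trans (Equiv.swap n k).toEmbedding, ⟨n, le_rfl⟩, by simp⟩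
      obtain ⟨v, hv⟩ := joint_surjective c (hdet n c) (fun _ => y)
      exact ⟨v, by simpa [joint, ha] using congrFun hv a⟩
    rw [Hent_linear e, LinearMap.range_eq_top.2 hsurj, finrank_top, hF]
    simp
  · intro n U
    have h := Hent_linear e (joint x n (fun u : U => u.1))
    rw [finrank_range_joint (hdet n), hF] at h
    rw [← mul_assoc, ← Nat.cast_mul]
    exact h
  · rw [Nat.cast_sum, Finset.sum_mul]
    refine Finset.sum_congr rfl fun n hn => ?_
    rw [Nat.cast_div (Nat.dvd_factorial (Nat.succ_pos n) (Finset.mem_range.1 hn))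
      (by positivity)]
    push_cast
    ring
end

section
/- Consider K-user secure summation with user selection over F_q with inputs of length L. Let U = {k_1, k_2, …, k_{|U|}} ⊆ [K] with |U| ≥ 2. Then for every m ∈ {2, …, |U|}: Σ_{i=2}^{m} I(Z_{k_i}; (Z_{k_j})_{j∈[i−1]} | (Z_{k_j})_{j∈[i+1:|U|]}) ≥ Σ_{i=1}^{m−1} H(W_{k_i} | (W_{k_j}, X_{k_j}^U)_{j∈[i−1]}, X_{k_i}^U, (W_{k_j}, Z_{k_j})_{j∈[m+1:|U|]}), where [i:j] denotes {i, i+1, …, j} (empty if i > j) and [i] = {1,…,i}. -/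
/-!
Write `A_i = (W_i, Z_i)` and `B_i = (W_i, X_i)` for the users `1, …, u` of the selected set (in the
order given by `idx`), and let `C` be the data `A_{m+1}, …, A_u`.

The left-hand side telescopes to the dual total correlation of `Z_1, …, Z_m` given
`Z_{m+1}, …, Z_u`, that is `H(Z_{[m]} | Z_{[m+1:u]}) - ∑_{i ≤ m} H(Z_i | all other Z)`. Independent
uniform inputs contribute `log |F^L|` each to every joint entropy and cancel, so every `Z_i` may be
replaced by `A_i`. Dual total correlation does not increase when each `A_i` is replaced by its
function `B_i`; concretely, the chain rule gives
`H(A_i | A_{≠i}) = H(B_i | A_{≠i}) + H(A_i | B_i, A_{≠i})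
  ≤ H(B_i | A_{≠i}) + H(A_i | A_{<i}, B_{[m]}, C)`,
and the last terms sum to `H(A_{[m]} | B_{[m]}, C)`. By correctness, `X_i` and `A_{≠i}` determine
the sum of the inputs and therefore `W_i` almost surely, so
`H(B_i | A_{≠i}) = H(X_i | A_{≠i}) ≤ H(X_i | B_{<i}, C)`. What is left of `H(B_{[m]} | C)` after
subtracting these terms is `∑_{i ≤ m} H(W_i | B_{<i}, X_i, C)`; the term `i = m` is nonnegative and
is dropped.

The only entropy inequality needed is submodularity (`Hent_submod`). It is phrased through the relation
"`P ω = P ω'` implies `T ω = T ω'`" ("`P` determines `T`"), so that all relabelling of joint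
variables reduces to pointwise reasoning. `step_le` is the inequality for one `i`, `pair_bound` its
sum over `i`.
-/

open scoped BigOperators

/-! ### Entropy of finite random variables -/

/-- The probability of the fibre of `X` through the sample point `ω`, that is `P(X = X(ω))`. -/
noncomputable def atomProb {Ω S : Type*} [Fintype Ω] (μ : Ω → ℝ) (X : Ω → S) (ω : Ω) : ℝ :=
  probOf μ X (X ω)

section Entropy

lemma atomProb_eq {Ω S : Type*} [Fintype Ω] (μ : Ω → ℝ) (X : Ω → S) (ω : Ω)
    [∀ ω', Decidable (X ω' = X ω)] : atomProb μ X ω = ∑ ω', if X ω' = X ω then μ ω' else 0 := by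
  rw [atomProb, probOf, Finset.sum_filter]
  congr!

/-- Averaging a function of `X` over its law is averaging it over the sample space. -/
lemma sum_probOf_mul {Ω S : Type*} [Fintype Ω] [Fintype S] (μ : Ω → ℝ) (X : Ω → S) (g : S → ℝ) :
    ∑ s, probOf μ X s * g s = ∑ ω, μ ω * g (X ω) := by
  classical
  simp only [probOf, Finset.sum_filter, Finset.sum_mul]
  rw [Finset.sum_comm]
  refine Finset.sum_congr rfl fun ω _ => ?_
  simp [ite_mul]

/-- Entropy as an expectation over the sample space; the value type of `X` no longer occurs. -/
lemma Hent_eq {Ω S : Type*} [Fintype Ω] [Fintype S] (μ : Ω → ℝ) (X : Ω → S) :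
    Hent μ X = - ∑ ω, μ ω * Real.logb 2 (atomProb μ X ω) := by
  rw [Hent, sum_probOf_mul μ X (fun s => Real.logb 2 (probOf μ X s))]
  rfl

/-- Random variables that determine each other have the same entropy. -/
lemma Hent_congr {Ω S T : Type*} [Fintype Ω] [Fintype S] [Fintype T] (μ : Ω → ℝ)
    (X : Ω → S) (Y : Ω → T) (h : ∀ ω ω', X ω = X ω' ↔ Y ω = Y ω') :
    Hent μ X = Hent μ Y := by
  classical
  have : atomProb μ X = atomProb μ Y := by
    funext ω
    simp only [atomProb_eq, h]
  rw [Hent_eq, Hent_eq, this]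

lemma le_atomProb {Ω S : Type*} [Fintype Ω] {μ : Ω → ℝ} (hμ0 : ∀ ω, 0 ≤ μ ω) (X : Ω → S) (ω : Ω) :
    μ ω ≤ atomProb μ X ω := by
  classical
  rw [atomProb_eq]
  have := Finset.single_le_sum (f := fun ω' => if X ω' = X ω then μ ω' else 0)
    (fun i _ => by split_ifs <;> simp [hμ0]) (Finset.mem_univ ω)
  simpa using this

lemma atomProb_nonneg {Ω S : Type*} [Fintype Ω] {μ : Ω → ℝ} (hμ0 : ∀ ω, 0 ≤ μ ω) (X : Ω → S)
    (ω : Ω) : 0 ≤ atomProb μ X ω := (hμ0 ω).trans (le_atomProb hμ0 X ω)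

/-- The analytic core of submodularity: when `P` and `Q` each determine `T`,
the ratio `p_P p_Q / (p_(P,Q) p_T)` of the mass functions has expectation at most one. Null fibres
cause no trouble, because division by zero makes their contribution zero. -/
lemma sum_ratio_le_one {Ω A B C : Type*} [Fintype Ω] {μ : Ω → ℝ} (hμ0 : ∀ ω, 0 ≤ μ ω)
    (hμ1 : ∑ ω, μ ω = 1) (P : Ω → A) (Q : Ω → B) (T : Ω → C)
    (hPT : ∀ ω ω', P ω = P ω' → T ω = T ω') (hQT : ∀ ω ω', Q ω = Q ω' → T ω = T ω') :
    ∑ ω, μ ω * (atomProb μ P ω * atomProb μ Q ω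
      / (atomProb μ (fun ω => (P ω, Q ω)) ω * atomProb μ T ω)) ≤ 1 := by
  classical
  set r := atomProb μ (fun ω => (P ω, Q ω)) with hr
  -- the sum runs over one fibre of `(P, Q)`, on which `r` is constant and equal to its mass
  have key : ∀ ω₁ ω₂, (∑ ω, if P ω₁ = P ω ∧ Q ω₂ = Q ω then μ ω / (r ω * atomProb μ T ω) else 0)
      ≤ if T ω₂ = T ω₁ then 1 / atomProb μ T ω₁ else 0 := by
    intro ω₁ ω₂
    by_cases hex : ∃ ω₀, P ω₁ = P ω₀ ∧ Q ω₂ = Q ω₀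
    · obtain ⟨ω₀, h1, h2⟩ := hex
      have hT : T ω₂ = T ω₁ := (hQT _ _ h2).trans (hPT _ _ h1).symm
      have hc : ∀ ω, P ω₁ = P ω ∧ Q ω₂ = Q ω → r ω = r ω₀ ∧ atomProb μ T ω = atomProb μ T ω₁ := by
        rintro ω ⟨h3, h4⟩
        have : T ω = T ω₁ := (hPT _ _ h3).symm
        have h5 : P ω = P ω₀ := h3.symm.trans h1
        have h6 : Q ω = Q ω₀ := h4.symm.trans h2
        simp only [hr, atomProb_eq, this, h5, h6, and_self]
      rw [if_pos hT]
      calc _ = ∑ ω, (if (P ω, Q ω) = (P ω₀, Q ω₀) then μ ω else 0)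
                / (r ω₀ * atomProb μ T ω₁) := by
            refine Finset.sum_congr rfl fun ω _ => ?_
            have : (P ω, Q ω) = (P ω₀, Q ω₀) ↔ P ω₁ = P ω ∧ Q ω₂ = Q ω := by
              rw [Prod.mk.injEq, h1, h2, eq_comm, @eq_comm _ (Q ω)]
            by_cases h : P ω₁ = P ω ∧ Q ω₂ = Q ω
            · rw [if_pos h, if_pos (this.2 h), (hc ω h).1, (hc ω h).2]
            · rw [if_neg h, if_neg (fun h' => h (this.1 h')), zero_div]
        _ = (r ω₀ / r ω₀) * (1 / atomProb μ T ω₁) := by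
            rw [← Finset.sum_div, ← atomProb_eq μ (fun ω => (P ω, Q ω)) ω₀, ← hr]
            rw [div_mul_div_comm, mul_one]
        _ ≤ _ := mul_le_of_le_one_left
            (one_div_nonneg.2 (atomProb_nonneg hμ0 T ω₁)) (div_self_le_one _)
    · rw [Finset.sum_eq_zero]
      · split_ifs
        · exact one_div_nonneg.2 (atomProb_nonneg hμ0 T ω₁)
        · exact le_rfl
      · intro ω _
        rw [if_neg fun h => hex ⟨ω, h⟩]
  calc _ = ∑ ω, ∑ ω₁, ∑ ω₂, μ ω₁ * μ ω₂ *
        (if P ω₁ = P ω ∧ Q ω₂ = Q ω then μ ω / (r ω * atomProb μ T ω) else 0) := by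
        refine Finset.sum_congr rfl fun ω _ => ?_
        rw [mul_div_assoc', mul_comm (μ ω), mul_div_assoc, atomProb_eq μ P, atomProb_eq μ Q,
          Finset.sum_mul_sum, Finset.sum_mul]
        refine Finset.sum_congr rfl fun ω₁ _ => ?_
        rw [Finset.sum_mul]
        refine Finset.sum_congr rfl fun ω₂ _ => ?_
        by_cases h1 : P ω₁ = P ω <;> by_cases h2 : Q ω₂ = Q ω <;> simp [h1, h2]
    _ = ∑ ω₁, ∑ ω₂, μ ω₁ * μ ω₂ * ∑ ω,
        (if P ω₁ = P ω ∧ Q ω₂ = Q ω then μ ω / (r ω * atomProb μ T ω) else 0) := by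
        rw [Finset.sum_comm]
        refine Finset.sum_congr rfl fun ω₁ _ => ?_
        rw [Finset.sum_comm]
        refine Finset.sum_congr rfl fun ω₂ _ => ?_
        rw [Finset.mul_sum]
    _ ≤ ∑ ω₁, ∑ ω₂, μ ω₁ * μ ω₂ * (if T ω₂ = T ω₁ then 1 / atomProb μ T ω₁ else 0) :=
        Finset.sum_le_sum fun ω₁ _ => Finset.sum_le_sum fun ω₂ _ =>
          mul_le_mul_of_nonneg_left (key ω₁ ω₂) (mul_nonneg (hμ0 _) (hμ0 _))
    _ = ∑ ω₁, μ ω₁ * (atomProb μ T ω₁ / atomProb μ T ω₁) := by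
        refine Finset.sum_congr rfl fun ω₁ _ => ?_
        conv_rhs => rw [div_eq_mul_one_div]
        nth_rewrite 2 [atomProb_eq μ T]
        rw [Finset.sum_mul, Finset.mul_sum]
        refine Finset.sum_congr rfl fun ω₂ _ => ?_
        split_ifs <;> ring
    _ ≤ ∑ ω₁, μ ω₁ := Finset.sum_le_sum fun ω₁ _ =>
        mul_le_of_le_one_right (hμ0 _) (div_self_le_one _)
    _ = 1 := hμ1

/-- Submodularity of entropy, with joint variables replaced by the relation of determination:
`T` is a common function of `P` and `Q`, and `R` is a function of the pair `(P, Q)`. -/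
lemma Hent_submod {Ω A B C D : Type*} [Fintype Ω] [Fintype A] [Fintype B] [Fintype C] [Fintype D]
    {μ : Ω → ℝ} (hμ0 : ∀ ω, 0 ≤ μ ω) (hμ1 : ∑ ω, μ ω = 1)
    (P : Ω → A) (Q : Ω → B) (R : Ω → D) (T : Ω → C)
    (hR : ∀ ω ω', P ω = P ω' → Q ω = Q ω' → R ω = R ω')
    (hPT : ∀ ω ω', P ω = P ω' → T ω = T ω') (hQT : ∀ ω ω', Q ω = Q ω' → T ω = T ω') :
    Hent μ R + Hent μ T ≤ Hent μ P + Hent μ Q := by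
  classical
  have hratio := sum_ratio_le_one hμ0 hμ1 P Q T hPT hQT
  set r := atomProb μ (fun ω => (P ω, Q ω)) with hr
  have hrR : ∀ ω, r ω ≤ atomProb μ R ω := by
    intro ω
    rw [hr, atomProb_eq, atomProb_eq]
    refine Finset.sum_le_sum fun ω' _ => ?_
    by_cases h : (P ω', Q ω') = (P ω, Q ω)
    · rw [if_pos h, if_pos (hR _ _ (Prod.ext_iff.1 h).1 (Prod.ext_iff.1 h).2)]
    · rw [if_neg h]
      split_ifs <;> simp [hμ0]
  have hlog2 : 0 < Real.log 2 := Real.log_pos one_lt_two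
  have hpt : ∀ ω, μ ω * (Real.logb 2 (atomProb μ P ω) + Real.logb 2 (atomProb μ Q ω)
      - Real.logb 2 (atomProb μ R ω) - Real.logb 2 (atomProb μ T ω))
      ≤ (μ ω * (atomProb μ P ω * atomProb μ Q ω / (r ω * atomProb μ T ω)) - μ ω) / Real.log 2 := by
    intro ω
    rcases (hμ0 ω).eq_or_lt with h0 | h0
    · simp [← h0]
    have hP := h0.trans_le (le_atomProb hμ0 P ω)
    have hQ := h0.trans_le (le_atomProb hμ0 Q ω)
    have hT := h0.trans_le (le_atomProb hμ0 T ω)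
    have hr0 : 0 < r ω := h0.trans_le (le_atomProb hμ0 _ ω)
    have hlr : Real.log (r ω) ≤ Real.log (atomProb μ R ω) := Real.log_le_log hr0 (hrR ω)
    have hl := Real.log_le_sub_one_of_pos (div_pos (mul_pos hP hQ) (mul_pos hr0 hT))
    rw [Real.log_div (mul_pos hP hQ).ne' (mul_pos hr0 hT).ne', Real.log_mul hP.ne' hQ.ne',
      Real.log_mul hr0.ne' hT.ne'] at hl
    simp only [Real.logb]
    rw [← add_div, ← sub_div, ← sub_div, mul_div_assoc']
    refine div_le_div_of_nonneg_right ?_ hlog2.le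
    nlinarith [mul_le_mul_of_nonneg_left hl h0.le, mul_le_mul_of_nonneg_left hlr h0.le]
  have hsum := Finset.sum_le_sum fun ω (_ : ω ∈ Finset.univ) => hpt ω
  rw [← Finset.sum_div, Finset.sum_sub_distrib, hμ1] at hsum
  have h0 := hsum.trans (div_nonpos_of_nonpos_of_nonneg (sub_nonpos.2 hratio) hlog2.le)
  simp only [mul_sub, mul_add, Finset.sum_sub_distrib, Finset.sum_add_distrib] at h0
  simp only [Hent_eq]
  linarith

/-- A function of `P` has at most the entropy of `P`. -/
lemma Hent_mono {Ω A B : Type*} [Fintype Ω] [Fintype A] [Fintype B]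
    {μ : Ω → ℝ} (hμ0 : ∀ ω, 0 ≤ μ ω) (hμ1 : ∑ ω, μ ω = 1) (P : Ω → A) (T : Ω → B)
    (h : ∀ ω ω', P ω = P ω' → T ω = T ω') : Hent μ T ≤ Hent μ P := by
  have := Hent_submod hμ0 hμ1 P P P T (fun _ _ h _ => h) h h
  linarith

lemma probOf_comp {Ω S T : Type*} [Fintype Ω] [Fintype S] (μ : Ω → ℝ) (X : Ω → S) (f : S → T)
    (t : T) [DecidablePred fun s => f s = t] :
    probOf μ (fun ω => f (X ω)) t = ∑ s with f s = t, probOf μ X s := by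
  classical
  have := sum_probOf_mul μ X (fun s => if f s = t then 1 else 0)
  rw [Finset.sum_filter, probOf, Finset.sum_filter]
  simp only [mul_ite, mul_one, mul_zero] at this
  rw [this]
  congr!

lemma sum_probOf {Ω S : Type*} [Fintype Ω] [Fintype S] (μ : Ω → ℝ) (X : Ω → S) :
    ∑ s, probOf μ X s = ∑ ω, μ ω := by
  simpa using sum_probOf_mul μ X (fun _ => 1)

/-- Functions of independent variables are independent. -/
lemma probOf_indep_comp {Ω A B C D : Type*} [Fintype Ω] [Fintype A] [Fintype B]
    (μ : Ω → ℝ) (X : Ω → A) (Y : Ω → B) (f : A → C) (g : B → D)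
    (h : ∀ a b, probOf μ (fun ω => (X ω, Y ω)) (a, b) = probOf μ X a * probOf μ Y b) (c : C) (d : D) :
    probOf μ (fun ω => (f (X ω), g (Y ω))) (c, d)
      = probOf μ (fun ω => f (X ω)) c * probOf μ (fun ω => g (Y ω)) d := by
  classical
  rw [probOf_comp μ X, probOf_comp μ Y, Finset.sum_mul_sum,
    probOf_comp μ (fun ω => (X ω, Y ω)) (fun p => (f p.1, g p.2)), ← Finset.sum_product']
  refine Finset.sum_congr ?_ fun p _ => h p.1 p.2
  ext p
  simp

/-- Entropy is additive over independent pairs. -/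
lemma Hent_prod_of_indep {Ω A B : Type*} [Fintype Ω] [Fintype A] [Fintype B]
    {μ : Ω → ℝ} (hμ0 : ∀ ω, 0 ≤ μ ω) (X : Ω → A) (Y : Ω → B)
    (h : ∀ a b, probOf μ (fun ω => (X ω, Y ω)) (a, b) = probOf μ X a * probOf μ Y b) :
    Hent μ (fun ω => (X ω, Y ω)) = Hent μ X + Hent μ Y := by
  simp only [Hent_eq]
  rw [← neg_add, ← Finset.sum_add_distrib]
  congr 1
  refine Finset.sum_congr rfl fun ω _ => ?_
  rcases (hμ0 ω).eq_or_lt with h0 | h0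
  · simp [← h0]
  have hX := h0.trans_le (le_atomProb hμ0 X ω)
  have hY := h0.trans_le (le_atomProb hμ0 Y ω)
  have : atomProb μ (fun ω => (X ω, Y ω)) ω = atomProb μ X ω * atomProb μ Y ω := h _ _
  rw [this, Real.logb_mul hX.ne' hY.ne', mul_add]

/-- A variable with constant mass function has entropy `log₂` of the number of its values. -/
lemma Hent_of_const {Ω S : Type*} [Fintype Ω] [Fintype S] {μ : Ω → ℝ} (hμ1 : ∑ ω, μ ω = 1)
    (X : Ω → S) (c : ℝ) (h : ∀ s, probOf μ X s = c) :
    Hent μ X = Real.logb 2 (Fintype.card S) := by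
  have h1 := sum_probOf μ X
  simp only [h, hμ1, Finset.sum_const, nsmul_eq_mul, Finset.card_univ] at h1
  have hc : c = (Fintype.card S : ℝ)⁻¹ := eq_inv_of_mul_eq_one_right h1
  simp only [Hent, h, Finset.sum_const, nsmul_eq_mul, Finset.card_univ]
  rw [← mul_assoc, h1, hc, Real.logb_inv]
  ring

/-- If `X` is uniform on a finite group, so is its image under a surjective homomorphism, because
all fibres of the homomorphism have the same size. -/
lemma probOf_hom_const {Ω G H : Type*} [Fintype Ω] [AddGroup G] [Fintype G] [AddGroup H]
    (μ : Ω → ℝ) (X : Ω → G) (φ : G →+ H) (hφ : Function.Surjective φ) (c : ℝ)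
    (h : ∀ g, probOf μ X g = c) (y : H) :
    probOf μ (fun ω => φ (X ω)) y = probOf μ (fun ω => φ (X ω)) 0 := by
  classical
  rw [probOf_comp μ X φ, probOf_comp μ X φ]
  simp only [h, Finset.sum_const]
  congr 1
  exact AddMonoidHom.card_fiber_eq_of_mem_range φ (hφ y) (hφ 0)

end Entropy

/-! ### Dual total correlation of inputs and keys -/

section Core

variable {Ω : Type*} {SZ SX : ℕ → Type*} {G : Type*}

/-- The joint observation of the keys of the users in `S`, the messages of the users in `P` and
the inputs of the users in `T`. -/
def obs (Z : ∀ j, Ω → SZ j) (X : ∀ j, Ω → SX j) (W : ℕ → Ω → G) (S P T : Finset ℕ) (ω : Ω) :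
    (∀ j : S, SZ j) × (∀ j : P, SX j) × (T → G) :=
  (fun j => Z j ω, fun j => X j ω, fun j => W j ω)

lemma obs_eq_iff (Z : ∀ j, Ω → SZ j) (X : ∀ j, Ω → SX j) (W : ℕ → Ω → G) (S P T : Finset ℕ)
    (ω ω' : Ω) : obs Z X W S P T ω = obs Z X W S P T ω' ↔
      (∀ j ∈ S, Z j ω = Z j ω') ∧ (∀ j ∈ P, X j ω = X j ω') ∧ (∀ j ∈ T, W j ω = W j ω') := by
  simp [obs, funext_iff]

/-- The joint entropy of `obs Z X W S P T`. -/
noncomputable def obsEnt [Fintype Ω] [∀ j, Fintype (SZ j)] [∀ j, Fintype (SX j)] [Fintype G]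
    (μ : Ω → ℝ) (Z : ∀ j, Ω → SZ j) (X : ∀ j, Ω → SX j) (W : ℕ → Ω → G) (S P T : Finset ℕ) : ℝ :=
  Hent μ (obs Z X W S P T)

/-- The bound on `H(A_i | A_{≠i})` by `H(X_i | B_{<i}, C) + H(A_i | A_{<i}, B_{[m]}, C)`, where
`A_j = (W_j, Z_j)`, `B_j = (W_j, X_j)` and `C` consists of the `A_j` with `j > m`. The first part
`h1` of the proof passes from `A_i` to `B_i`, `h2` uses correctness to remove `W_i` from `B_i`, and
`h3` drops conditioning. -/
lemma step_le [Fintype Ω] [∀ j, Fintype (SZ j)] [∀ j, Fintype (SX j)] [Fintype G] [AddCommGroup G]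
    {μ : Ω → ℝ} (hμ0 : ∀ ω, 0 ≤ μ ω) (hμ1 : ∑ ω, μ ω = 1)
    (Z : ∀ j, Ω → SZ j) (X : ∀ j, Ω → SX j) (W : ℕ → Ω → G) (u m i : ℕ) (hi : 1 ≤ i) (him : i ≤ m)
    (hmu : m ≤ u)
    (hX : ∀ j ∈ Finset.Icc 1 u, ∀ ω ω', W j ω = W j ω' → Z j ω = Z j ω' → X j ω = X j ω')
    (hcorr : Hent μ (fun ω => (∑ j ∈ Finset.Icc 1 u, W j ω, obs Z X W ∅ (Finset.Icc 1 u) ∅ ω))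
      = obsEnt μ Z X W ∅ (Finset.Icc 1 u) ∅) :
    obsEnt μ Z X W (Finset.Icc 1 u) ∅ (Finset.Icc 1 u)
        - obsEnt μ Z X W (Finset.Icc 1 u \ {i}) ∅ (Finset.Icc 1 u \ {i})
      ≤ (obsEnt μ Z X W (Finset.Icc (m + 1) u) (Finset.Icc 1 i)
            (Finset.Icc 1 (i - 1) ∪ Finset.Icc (m + 1) u)
          - obsEnt μ Z X W (Finset.Icc (m + 1) u) (Finset.Icc 1 (i - 1))
            (Finset.Icc 1 (i - 1) ∪ Finset.Icc (m + 1) u))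
        + (obsEnt μ Z X W (Finset.Icc 1 i ∪ Finset.Icc (m + 1) u) (Finset.Icc 1 m)
            (Finset.Icc 1 u)
          - obsEnt μ Z X W (Finset.Icc 1 (i - 1) ∪ Finset.Icc (m + 1) u) (Finset.Icc 1 m)
            (Finset.Icc 1 u)) := by
  have h1 : obsEnt μ Z X W (Finset.Icc 1 u) ∅ (Finset.Icc 1 u)
      + obsEnt μ Z X W (Finset.Icc 1 (i - 1) ∪ Finset.Icc (m + 1) u) (Finset.Icc 1 m)
            (Finset.Icc 1 u)
      ≤ obsEnt μ Z X W (Finset.Icc 1 i ∪ Finset.Icc (m + 1) u) (Finset.Icc 1 m)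
            (Finset.Icc 1 u)
      + obsEnt μ Z X W (Finset.Icc 1 u \ {i}) {i} (Finset.Icc 1 u) := by
    refine Hent_submod hμ0 hμ1 _ _ _ _ ?_ ?_ ?_ <;> intro ω ω' <;>
      simp only [obs_eq_iff, Finset.mem_Icc, Finset.mem_union, Finset.mem_sdiff,
        Finset.mem_singleton, Finset.notMem_empty] at hX ⊢
    · grind
    · grind
    · grind
  have h2 : obsEnt μ Z X W (Finset.Icc 1 u \ {i}) {i} (Finset.Icc 1 u)
      + obsEnt μ Z X W ∅ (Finset.Icc 1 u) ∅
      ≤ Hent μ (fun ω => (∑ j ∈ Finset.Icc 1 u, W j ω, obs Z X W ∅ (Finset.Icc 1 u) ∅ ω))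
      + obsEnt μ Z X W (Finset.Icc 1 u \ {i}) {i} (Finset.Icc 1 u \ {i}) := by
    refine Hent_submod hμ0 hμ1 _ _ _ _ ?_ ?_ ?_ <;> intro ω ω' <;>
      simp only [obs_eq_iff, Finset.mem_Icc, Finset.mem_sdiff, Prod.mk.injEq,
        Finset.mem_singleton, Finset.notMem_empty] at hX ⊢
    · rintro ⟨hs, -⟩ ⟨hz, hx, hw⟩
      refine ⟨hz, hx, fun j hj => ?_⟩
      by_cases hji : j = i
      · subst hji
        have hmem : j ∈ Finset.Icc 1 u := Finset.mem_Icc.2 hj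
        rw [← Finset.sum_erase_add _ _ hmem, ← Finset.sum_erase_add _ _ hmem,
          Finset.sum_congr rfl (g := fun k => W k ω') fun k hk => hw k ?_] at hs
        · exact add_left_cancel hs
        · rw [Finset.mem_erase, Finset.mem_Icc] at hk
          exact ⟨hk.2, hk.1⟩
      · exact hw j ⟨hj, hji⟩
    · grind
    · grind
  have h3 : obsEnt μ Z X W (Finset.Icc 1 u \ {i}) {i} (Finset.Icc 1 u \ {i})
      + obsEnt μ Z X W (Finset.Icc (m + 1) u) (Finset.Icc 1 (i - 1))
            (Finset.Icc 1 (i - 1) ∪ Finset.Icc (m + 1) u)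
      ≤ obsEnt μ Z X W (Finset.Icc (m + 1) u) (Finset.Icc 1 i)
            (Finset.Icc 1 (i - 1) ∪ Finset.Icc (m + 1) u)
      + obsEnt μ Z X W (Finset.Icc 1 u \ {i}) ∅ (Finset.Icc 1 u \ {i}) := by
    refine Hent_submod hμ0 hμ1 _ _ _ _ ?_ ?_ ?_ <;> intro ω ω' <;>
      simp only [obs_eq_iff, Finset.mem_Icc, Finset.mem_union, Finset.mem_sdiff,
        Finset.mem_singleton, Finset.notMem_empty] at hX ⊢
    · grind
    · grind
    · grind
  linarith

/-- The lower bound with every key replaced by the pair (input, key). -/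
lemma pair_bound [Fintype Ω] [∀ j, Fintype (SZ j)] [∀ j, Fintype (SX j)] [Fintype G]
    [AddCommGroup G] {μ : Ω → ℝ} (hμ0 : ∀ ω, 0 ≤ μ ω) (hμ1 : ∑ ω, μ ω = 1)
    (Z : ∀ j, Ω → SZ j) (X : ∀ j, Ω → SX j) (W : ℕ → Ω → G) (u m : ℕ) (hm : 2 ≤ m)
    (hmu : m ≤ u)
    (hX : ∀ j ∈ Finset.Icc 1 u, ∀ ω ω', W j ω = W j ω' → Z j ω = Z j ω' → X j ω = X j ω')
    (hcorr : Hent μ (fun ω => (∑ j ∈ Finset.Icc 1 u, W j ω, obs Z X W ∅ (Finset.Icc 1 u) ∅ ω))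
      = obsEnt μ Z X W ∅ (Finset.Icc 1 u) ∅) :
    ∑ i ∈ Finset.Icc 1 (m - 1),
        (obsEnt μ Z X W (Finset.Icc (m + 1) u) (Finset.Icc 1 i)
            (Finset.Icc 1 i ∪ Finset.Icc (m + 1) u)
          - obsEnt μ Z X W (Finset.Icc (m + 1) u) (Finset.Icc 1 i)
            (Finset.Icc 1 (i - 1) ∪ Finset.Icc (m + 1) u))
      ≤ ∑ i ∈ Finset.Icc 2 m,
        (obsEnt μ Z X W (Finset.Icc i u) ∅ (Finset.Icc i u)
          - obsEnt μ Z X W (Finset.Icc (i + 1) u) ∅ (Finset.Icc (i + 1) u)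
          - obsEnt μ Z X W (Finset.Icc 1 u) ∅ (Finset.Icc 1 u)
          + obsEnt μ Z X W (Finset.Icc 1 u \ {i}) ∅ (Finset.Icc 1 u \ {i})) := by
  set a : Finset ℕ → ℝ := fun S => obsEnt μ Z X W S ∅ S with ha
  set C := Finset.Icc (m + 1) u with hC
  set b : ℕ → ℝ := fun i =>
    obsEnt μ Z X W C (Finset.Icc 1 i) (Finset.Icc 1 i ∪ C) with hb
  set c : ℕ → ℝ := fun i =>
    obsEnt μ Z X W C (Finset.Icc 1 i) (Finset.Icc 1 (i - 1) ∪ C) with hc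
  set e : ℕ → ℝ := fun i =>
    obsEnt μ Z X W (Finset.Icc 1 i ∪ C) (Finset.Icc 1 m) (Finset.Icc 1 u) with he
  have tel : ∀ f : ℕ → ℝ, ∑ i ∈ Finset.Icc 1 m, (f i - f (i - 1)) = f m - f 0 := by
    intro f
    rw [← Finset.sum_range_sub f m]
    refine (Finset.sum_bij (fun k _ => k + 1) ?_ ?_ ?_ ?_).symm
    · intro k hk; simp only [Finset.mem_range, Finset.mem_Icc] at *; omega
    · intro k _ l _ h; omega
    · intro k hk
      simp only [Finset.mem_range, Finset.mem_Icc] at *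
      exact ⟨k - 1, by omega, by omega⟩
    · intro k _; simp
  have tel' : ∑ i ∈ Finset.Icc 1 m, (a (Finset.Icc i u) - a (Finset.Icc (i + 1) u))
      = a (Finset.Icc 1 u) - a C := by
    have := tel fun i => - a (Finset.Icc (i + 1) u)
    rw [hC]
    rw [Finset.sum_congr rfl (g := fun i => a (Finset.Icc i u) - a (Finset.Icc (i + 1) u))] at this
    · rw [this]; simp; ring
    · intro i hi
      rw [Finset.mem_Icc] at hi
      simp only [Nat.sub_add_cancel hi.1]
      ring
  have hstep : ∑ i ∈ Finset.Icc 1 m, (a (Finset.Icc 1 u) - a (Finset.Icc 1 u \ {i}))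
      ≤ ∑ i ∈ Finset.Icc 1 m, ((c i - b (i - 1)) + (e i - e (i - 1))) := by
    refine Finset.sum_le_sum fun i hi => ?_
    rw [Finset.mem_Icc] at hi
    exact step_le hμ0 hμ1 Z X W u m i hi.1 hi.2 hmu hX hcorr
  -- `e` climbs from `H(B_{[m]}, C)` to the joint entropy of all the `A_j`
  have hem : e m = a (Finset.Icc 1 u) := by
    refine Hent_congr μ _ _ fun ω ω' => ?_
    simp only [obs_eq_iff, Finset.mem_Icc, Finset.mem_union, hC, Finset.notMem_empty] at hX ⊢
    grind
  have he0 : e 0 = b m := by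
    refine Hent_congr μ _ _ fun ω ω' => ?_
    simp only [obs_eq_iff, Finset.mem_Icc, Finset.mem_union, hC] at hX ⊢
    grind
  have hb0 : b 0 = a C := by
    refine Hent_congr μ _ _ fun ω ω' => ?_
    simp only [obs_eq_iff, Finset.mem_Icc, Finset.mem_union, hC, Finset.notMem_empty] at hX ⊢
    grind
  have hlast : c m ≤ b m := by
    refine Hent_mono hμ0 hμ1 _ _ fun ω ω' => ?_
    simp only [obs_eq_iff, Finset.mem_Icc, Finset.mem_union]
    grind
  -- the summand at `i = 1` vanishes, so the sum may start there
  have hfirst : ∑ i ∈ Finset.Icc 1 m, (a (Finset.Icc i u) - a (Finset.Icc (i + 1) u)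
        - a (Finset.Icc 1 u) + a (Finset.Icc 1 u \ {i}))
      = ∑ i ∈ Finset.Icc 2 m, (a (Finset.Icc i u) - a (Finset.Icc (i + 1) u)
        - a (Finset.Icc 1 u) + a (Finset.Icc 1 u \ {i})) := by
    rw [← Finset.add_sum_Ioc_eq_sum_Icc (show 1 ≤ m by omega)]
    have : Finset.Icc 1 u \ {1} = Finset.Icc (1 + 1) u := by
      ext j; simp only [Finset.mem_sdiff, Finset.mem_Icc, Finset.mem_singleton]; omega
    have h2 : Finset.Ioc 1 m = Finset.Icc 2 m := by
      ext j; simp only [Finset.mem_Ioc, Finset.mem_Icc]; omega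
    rw [this, h2]
    ring
  have hr : ∑ i ∈ Finset.Icc 1 m, (b i - c i)
      = ∑ i ∈ Finset.Icc 1 (m - 1), (b i - c i) + (b m - c m) := by
    obtain ⟨k, rfl⟩ : ∃ k, m = k + 1 := ⟨m - 1, by omega⟩
    rw [Finset.sum_Icc_succ_top (by omega)]
    simp
  have telb := tel b
  have tele := tel e
  rw [← hfirst]
  simp only [Finset.sum_sub_distrib, Finset.sum_add_distrib] at *
  linarith

end Core

/-! ### From keys to pairs (input, key) -/

/-- Lemma 4, inequality (24) of the paper: in K-user secure summation with user selection,
for a selected set U = {k_1,…,k_{|U|}} (|U| ≥ 2) and every m ∈ [2:|U|],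
Σ_{i∈[2:m]} I(Z_{k_i}; (Z_{k_j})_{j∈[i−1]} | (Z_{k_j})_{j∈[i+1:|U|]})
  ≥ Σ_{i∈[m−1]} H(W_{k_i} | (W_{k_j},X_{k_j}^U)_{j∈[i−1]}, X_{k_i}^U, (W_{k_j},Z_{k_j})_{j∈[m+1:|U|]}). -/
theorem secure_summation_cmi_sum_lower_bound
    (K L q : ℕ) (hK : 1 ≤ K) (hL : 1 ≤ L) (hq : IsPrimePow q)
    (F : Type) [Field F] [Fintype F] (hF : Fintype.card F = q)
    (Ω : Type) [Fintype Ω] (μ : Ω → ℝ)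
    (hμ0 : ∀ ω, 0 ≤ μ ω) (hμ1 : (∑ ω, μ ω) = 1)
    (SZ : Fin K → Type) [∀ k, Fintype (SZ k)]
    (M : Finset (Fin K) → Fin K → Type) [∀ U k, Fintype (M U k)]
    (W : Fin K → Ω → (Fin L → F)) (Z : ∀ k : Fin K, Ω → SZ k)
    (X : ∀ (U : Finset (Fin K)) (k : Fin K), Ω → M U k)
    -- the inputs W_1, …, W_K are i.i.d. uniform over F_q^L
    (hWunif : ∀ w : Fin K → Fin L → F,
      probOf μ (fun ω (k : Fin K) => W k ω) w = ((q : ℝ) ^ (L * K))⁻¹)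
    -- (W_1,…,W_K) is independent of (Z_1,…,Z_K)
    (hWZind : ∀ (w : Fin K → Fin L → F) (z : ∀ k : Fin K, SZ k),
      probOf μ (fun ω => ((fun k : Fin K => W k ω), (fun k : Fin K => Z k ω))) (w, z)
        = probOf μ (fun ω (k : Fin K) => W k ω) w
            * probOf μ (fun ω (k : Fin K) => Z k ω) z)
    -- each message X_k^U is a deterministic function of (W_k, Z_k)
    (hXdet : ∀ (U : Finset (Fin K)) (k : Fin K), k ∈ U →
      ∃ f : (Fin L → F) → SZ k → M U k, ∀ ω, X U k ω = f (W k ω) (Z k ω))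
    -- correctness: H(Σ_{k∈U} W_k | (X_k^U)_{k∈U}) = 0
    (hcorr : ∀ U : Finset (Fin K),
      Hcond μ (fun ω => ∑ k ∈ U, W k ω) (fun ω (k : ↥U) => X U k.1 ω) = 0)
    -- security: I((W_k)_{k∈U}; (X_k^U)_{k∈U} | Σ_{k∈U} W_k) = 0
    (hsec : ∀ U : Finset (Fin K),
      CMI μ (fun ω (k : ↥U) => W k.1 ω) (fun ω (k : ↥U) => X U k.1 ω)
        (fun ω => ∑ k ∈ U, W k ω) = 0) :
    ∀ (u : ℕ) (hu : 2 ≤ u) (idx : ℕ → Fin K),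
      Set.InjOn idx (Finset.Icc 1 u) →
      ∀ m : ℕ, 2 ≤ m → m ≤ u →
      (∑ i ∈ Finset.Icc 2 m,
        CMI μ (Z (idx i))
          (fun ω (j : ↥(Finset.Icc 1 (i - 1))) => Z (idx j.1) ω)
          (fun ω (j : ↥(Finset.Icc (i + 1) u)) => Z (idx j.1) ω))
      ≥ ∑ i ∈ Finset.Icc 1 (m - 1),
          Hcond μ (W (idx i))
            (fun ω =>
              ((fun j : ↥(Finset.Icc 1 (i - 1)) =>
                  (W (idx j.1) ω, X ((Finset.Icc 1 u).image idx) (idx j.1) ω)),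
               X ((Finset.Icc 1 u).image idx) (idx i) ω,
               (fun j : ↥(Finset.Icc (m + 1) u) =>
                  (W (idx j.1) ω, Z (idx j.1) ω)))) := by
  intro u hu idx hinj m hm hmu
  set U := (Finset.Icc 1 u).image idx with hU
  set Z' : ∀ j, Ω → SZ (idx j) := fun j => Z (idx j) with hZ'
  set X' : ∀ j, Ω → M U (idx j) := fun j => X U (idx j) with hX'
  set W' : ℕ → Ω → (Fin L → F) := fun j => W (idx j) with hW'
  have hmemU : ∀ j ∈ Finset.Icc 1 u, idx j ∈ U := fun j hj => Finset.mem_image_of_mem _ hj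
  have hX : ∀ j ∈ Finset.Icc 1 u, ∀ ω ω', W' j ω = W' j ω' → Z' j ω = Z' j ω' →
      X' j ω = X' j ω' := by
    intro j hj ω ω' h1 h2
    obtain ⟨f, hf⟩ := hXdet U (idx j) (hmemU j hj)
    simp only [hX', hf]
    exact congrArg₂ f h1 h2
  have hXU : ∀ ω ω', ((fun k : ↥U => X U k.1 ω) = fun k : ↥U => X U k.1 ω') ↔
      obs Z' X' W' ∅ (Finset.Icc 1 u) ∅ ω = obs Z' X' W' ∅ (Finset.Icc 1 u) ∅ ω' := by
    intro ω ω'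
    rw [obs_eq_iff]
    constructor
    · intro h
      exact ⟨by simp, fun j hj => congrFun h ⟨idx j, hmemU j hj⟩, by simp⟩
    · rintro ⟨-, h, -⟩
      funext ⟨k, hk⟩
      obtain ⟨j, hj, rfl⟩ := Finset.mem_image.1 hk
      exact h j hj
  have hsum : ∀ ω, ∑ k ∈ U, W k ω = ∑ j ∈ Finset.Icc 1 u, W' j ω := fun ω =>
    Finset.sum_image fun a ha b hb h => hinj ha hb h
  have hcorr' : Hent μ (fun ω => (∑ j ∈ Finset.Icc 1 u, W' j ω,
      obs Z' X' W' ∅ (Finset.Icc 1 u) ∅ ω)) = obsEnt μ Z' X' W' ∅ (Finset.Icc 1 u) ∅ := by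
    have h := sub_eq_zero.1 (hcorr U)
    rw [Hent_congr μ (fun ω => (∑ k ∈ U, W k ω, fun k : ↥U => X U k.1 ω))
      (fun ω => (∑ j ∈ Finset.Icc 1 u, W' j ω, obs Z' X' W' ∅ (Finset.Icc 1 u) ∅ ω))
      (fun ω ω' => by rw [Prod.mk.injEq, Prod.mk.injEq, hXU, hsum, hsum])] at h
    rw [h]
    exact Hent_congr μ _ _ hXU
  -- each input contributes one fixed amount, independently of the other inputs and of the keys
  have hadd : ∀ S ⊆ Finset.Icc 1 u, obsEnt μ Z' X' W' S ∅ S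
      = obsEnt μ Z' X' W' S ∅ ∅ + S.card * Real.logb 2 (Fintype.card (Fin L → F)) := by
    intro S hS
    let φ : (Fin K → Fin L → F) →+ (S → Fin L → F) :=
      { toFun := fun w j => w (idx j), map_zero' := rfl, map_add' := fun _ _ => rfl }
    have hφ : Function.Surjective φ := by
      have hinjS : Function.Injective fun j : S => idx j := fun a b h =>
        Subtype.ext (hinj (hS a.2) (hS b.2) h)
      exact hinjS.surjective_comp_right
    have hWS : Hent μ (fun ω => φ fun k => W k ω)
        = S.card * Real.logb 2 (Fintype.card (Fin L → F)) := by
      rw [Hent_of_const hμ1 _ _ (probOf_hom_const μ (fun ω k => W k ω) φ hφ _ hWunif)]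
      rw [Fintype.card_fun, Fintype.card_coe]
      push_cast
      rw [Real.logb_pow]
    have hind := Hent_prod_of_indep hμ0 (fun ω => φ fun k => W k ω)
      (fun ω (j : S) => Z (idx j) ω) (probOf_indep_comp μ (fun ω k => W k ω)
        (fun ω k => Z k ω) φ (fun z (j : S) => z (idx j)) hWZind)
    rw [hWS] at hind
    rw [show obsEnt μ Z' X' W' S ∅ S = Hent μ (fun ω => (φ fun k => W k ω,
        fun j : S => Z (idx j) ω)) from ?_, hind, add_comm]
    · congr 1
      refine Hent_congr μ _ _ fun ω ω' => ?_
      rw [obs_eq_iff]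
      simp [funext_iff, hZ']
    · refine Hent_congr μ _ _ fun ω ω' => ?_
      rw [obs_eq_iff]
      simp [funext_iff, φ, hZ', hW', and_comm]
  have hmain := pair_bound hμ0 hμ1 Z' X' W' u m hm hmu hX hcorr'
  refine ge_iff_le.2 ((Eq.le ?_).trans (hmain.trans (Eq.le ?_)))
  · refine Finset.sum_congr rfl fun i hi => ?_
    rw [Finset.mem_Icc] at hi
    rw [Hcond]
    congr 1
    · refine Hent_congr μ _ _ fun ω ω' => ?_
      rw [obs_eq_iff]
      simp only [Prod.mk.injEq, funext_iff, Subtype.forall, Finset.mem_Icc, Finset.mem_union]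
      simp only [hX', hZ', hW']
      grind
    · refine Hent_congr μ _ _ fun ω ω' => ?_
      rw [obs_eq_iff]
      simp only [Prod.mk.injEq, funext_iff, Subtype.forall, Finset.mem_Icc, Finset.mem_union]
      simp only [hX', hZ', hW']
      grind
  · refine Finset.sum_congr rfl fun i hi => ?_
    rw [Finset.mem_Icc] at hi
    rw [hadd _ (Finset.Icc_subset_Icc (by omega) le_rfl),
      hadd _ (Finset.Icc_subset_Icc (by omega) le_rfl), hadd _ subset_rfl,
      hadd _ Finset.sdiff_subset]
    have e1 : Hent μ (fun ω => (Z (idx i) ω, fun j : ↥(Finset.Icc (i + 1) u) => Z (idx j.1) ω))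
        = obsEnt μ Z' X' W' (Finset.Icc i u) ∅ ∅ := by
      refine Hent_congr μ _ _ fun ω ω' => ?_
      rw [obs_eq_iff]
      simp only [Prod.mk.injEq, funext_iff, Subtype.forall, Finset.mem_Icc, Finset.notMem_empty]
      simp only [hZ']
      grind
    have e2 : Hent μ (fun ω => fun j : ↥(Finset.Icc (i + 1) u) => Z (idx j.1) ω)
        = obsEnt μ Z' X' W' (Finset.Icc (i + 1) u) ∅ ∅ := by
      refine Hent_congr μ _ _ fun ω ω' => ?_
      rw [obs_eq_iff]
      simp [funext_iff, hZ']
    have e3 : Hent μ (fun ω => (Z (idx i) ω, (fun j : ↥(Finset.Icc 1 (i - 1)) => Z (idx j.1) ω),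
          fun j : ↥(Finset.Icc (i + 1) u) => Z (idx j.1) ω))
        = obsEnt μ Z' X' W' (Finset.Icc 1 u) ∅ ∅ := by
      refine Hent_congr μ _ _ fun ω ω' => ?_
      rw [obs_eq_iff]
      simp only [Prod.mk.injEq, funext_iff, Subtype.forall, Finset.mem_Icc, Finset.notMem_empty]
      simp only [hZ']
      grind
    have e4 : Hent μ (fun ω => ((fun j : ↥(Finset.Icc 1 (i - 1)) => Z (idx j.1) ω),
          fun j : ↥(Finset.Icc (i + 1) u) => Z (idx j.1) ω))
        = obsEnt μ Z' X' W' (Finset.Icc 1 u \ {i}) ∅ ∅ := by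
      refine Hent_congr μ _ _ fun ω ω' => ?_
      rw [obs_eq_iff]
      simp only [Prod.mk.injEq, funext_iff, Subtype.forall, Finset.mem_Icc, Finset.notMem_empty,
        Finset.mem_sdiff, Finset.mem_singleton]
      simp only [hZ']
      grind
    rw [CMI, Hcond, Hcond, e1, e2, e3, e4]
    have c1 : ((Finset.Icc i u).card : ℝ) = (Finset.Icc (i + 1) u).card + 1 := by
      have : (Finset.Icc i u).card = (Finset.Icc (i + 1) u).card + 1 := by
        simp only [Nat.card_Icc]; omega
      exact_mod_cast this
    have c2 : ((Finset.Icc 1 u).card : ℝ) = (Finset.Icc 1 u \ {i}).card + 1 := by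
      have hmem : i ∈ Finset.Icc 1 u := Finset.mem_Icc.2 ⟨by omega, by omega⟩
      have := Finset.card_erase_add_one hmem
      rw [Finset.sdiff_singleton_eq_erase]
      exact_mod_cast this.symm
    rw [c1, c2]
    ring
end

section
/- Consider K-user secure summation with user selection over F_q with inputs of length L. Let U = {k_1, k_2, …, k_{|U|}} ⊆ [K] with |U| ≥ 2. Then Σ_{i=2}^{|U|} I(Z_{k_i}; (Z_{k_j})_{j∈[i−1]} | (Z_{k_j})_{j∈[i+1:|U|]}) ≥ (|U| − 1)·L·log₂ q, where [i:j] denotes {i, i+1, …, j} (empty if i > j) and [i] = {1,…,i}. -/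
/-!
Fix `U` and write `Z`, `X`, `W` for the keys, messages and inputs of the users in `U`, with
`σ = ∑ k ∈ U, W_k`. A subscript `-i` denotes all users of `U` but `i`.

The left side telescopes (`sum_cmi_eq`) to the dual total correlation
`H(Z) - ∑ i, H(Z_i | Z_{-i})`, so it remains to bound the last sum from above.
Since `Z` is independent of `W` and `X_i` is a function of `(Z_i, W)`,
`H(Z_i | Z_{-i}) = H(X_i, Z_i | Z_{-i}, W) ≤ H(X_i | X_{-i}, W) + H(Z_i | Z_{-i}, X, W)`.

Correctness and security give `I(X; W) = H(σ)`. Moreover `X_{-i}` is independent of `W`: by security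
it depends on `W` only through `σ`, while it is a function of `(W_{-i}, Z_{-i})`, which is independent
of `σ` (`sum_uniform_indep`). Hence `H(X_i | X_{-i}, W) = H(X_i | X_{-i}) - H(σ)`. Summing over `i`
with `∑ i, H(A_i | A_{-i}, V) ≤ H(A | V)` (`sum_ent_sub_erase_le`) for `A = X` and for `A = Z`,
`V = (X, W)`, the bound is
`H(X) - |U| H(σ) + H(Z | X, W) = H(Z) - |U| H(σ) + I(X; W) = H(Z) - (|U| - 1) H(σ)`
(`dual_total_correlation_bound`), and `H(σ) = L log q`.

The only property of entropy in these inequalities is submodularity (`ent_submod`). Random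
variables are replaced by their kernels, so that joint variables become infima of partitions of `Ω`
and variables of different types can be compared.
-/

open scoped BigOperators

/-! ### Entropy of partitions -/

open Classical in
/-- The total weight of the `r`-class of `ω`. -/
noncomputable def classWeight {Ω : Type*} [Fintype Ω] (μ : Ω → ℝ) (r : Setoid Ω) (ω : Ω) : ℝ :=
  ∑ ω', if r ω ω' then μ ω' else 0

/-- Shannon entropy (in bits) of the partition of `Ω` into the classes of `r`. A random variable is
encoded by its kernel, so that the joint variable of `r` and `s` is `r ⊓ s`, the variable `s` is a
function of `r` iff `r ≤ s`, and the trivial variable is `⊤`. -/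
noncomputable def ent {Ω : Type*} [Fintype Ω] (μ : Ω → ℝ) (r : Setoid Ω) : ℝ :=
  - ∑ ω, μ ω * Real.logb 2 (classWeight μ r ω)

lemma probOf_eq_classWeight {Ω S : Type*} [Fintype Ω] (μ : Ω → ℝ) (X : Ω → S) (ω : Ω) :
    probOf μ X (X ω) = classWeight μ (Setoid.ker X) ω := by
  classical
  unfold probOf classWeight
  rw [Finset.sum_filter]
  refine Finset.sum_congr rfl fun ω' _ => ?_
  simp only [Setoid.ker_def, eq_comm]

lemma Hent_eq_ent {Ω S : Type*} [Fintype Ω] [Fintype S] (μ : Ω → ℝ) (X : Ω → S) :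
    Hent μ X = ent μ (Setoid.ker X) := by
  classical
  unfold Hent ent
  congr 1
  rw [← Finset.sum_fiberwise_of_maps_to (s := Finset.univ) (t := Finset.univ) (g := X)
    (fun _ _ => Finset.mem_univ _)]
  refine Finset.sum_congr rfl fun s _ => ?_
  rw [show probOf μ X s * Real.logb 2 (probOf μ X s)
    = ∑ ω ∈ Finset.univ.filter (fun ω => X ω = s), μ ω * Real.logb 2 (probOf μ X s) by
      rw [← Finset.sum_mul]; rfl]
  refine Finset.sum_congr rfl fun ω hω => ?_
  rw [← (Finset.mem_filter.1 hω).2, probOf_eq_classWeight]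

lemma ker_prod {Ω S T : Type*} (X : Ω → S) (Y : Ω → T) :
    Setoid.ker (fun ω => (X ω, Y ω)) = Setoid.ker X ⊓ Setoid.ker Y := by
  ext a b
  rw [Setoid.inf_iff_and]
  exact Prod.mk_inj

lemma finset_inf_rel {Ω ι : Type*} (z : ι → Setoid Ω) (T : Finset ι) (a b : Ω) :
    (T.inf z) a b ↔ ∀ j ∈ T, z j a b := by
  classical
  induction T using Finset.induction_on with
  | empty => exact iff_of_true trivial (by simp)
  | insert i T _ ih =>
    rw [Finset.inf_insert, Finset.forall_mem_insert, ← ih]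
    exact Setoid.inf_iff_and

section Entropy

variable {Ω : Type*} [Fintype Ω] {μ : Ω → ℝ}

lemma le_classWeight (hμ : ∀ ω, 0 ≤ μ ω) (r : Setoid Ω) (ω : Ω) : μ ω ≤ classWeight μ r ω := by
  classical
  unfold classWeight
  have := Finset.single_le_sum (f := fun ω' => if r ω ω' then μ ω' else 0) (s := Finset.univ)
    (fun i _ => by split_ifs <;> simp [hμ]) (Finset.mem_univ ω)
  simpa [r.refl] using this

lemma classWeight_congr {r : Setoid Ω} {ω ω' : Ω} (h : r ω ω') :
    classWeight μ r ω = classWeight μ r ω' := by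
  classical
  unfold classWeight
  refine Finset.sum_congr rfl fun x _ => ?_
  have : r ω x ↔ r ω' x := ⟨fun h1 => r.trans (r.symm h) h1, fun h1 => r.trans h h1⟩
  simp [this]

lemma ent_top (hμ1 : ∑ ω, μ ω = 1) : ent μ ⊤ = 0 := by
  simp [ent, classWeight, Setoid.top_def, hμ1]

/-- The normalisation behind `ent_submod`: the weights `p(a) p(b) / p(c)` on pairs of an `a`-class
and a `b`-class inside a common `c`-class have total mass at most that of `μ`. -/
lemma sum_ratio_le (hμ : ∀ ω, 0 ≤ μ ω) {a b c : Setoid Ω} (ha : a ≤ c) (hb : b ≤ c) :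
    ∑ ω, μ ω * (classWeight μ a ω * classWeight μ b ω /
      (classWeight μ (a ⊓ b) ω * classWeight μ c ω)) ≤ ∑ ω, μ ω := by
  classical
  have h0 : ∀ r : Setoid Ω, ∀ ω, 0 ≤ classWeight μ r ω :=
    fun r ω => (hμ ω).trans (le_classWeight hμ r ω)
  have key : ∀ ω₁ ω₂ : Ω, ∑ ω, (if a ω ω₁ then μ ω₁ else 0) * (if b ω ω₂ then μ ω₂ else 0) *
      (μ ω / (classWeight μ (a ⊓ b) ω * classWeight μ c ω))
      ≤ (if c ω₁ ω₂ then μ ω₂ else 0) * (μ ω₁ / classWeight μ c ω₁) := by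
    intro ω₁ ω₂
    by_cases hex : ∃ ω₀, a ω₀ ω₁ ∧ b ω₀ ω₂
    · obtain ⟨ω₀, h1, h2⟩ := hex
      have hc : c ω₁ ω₂ := c.trans (c.symm (ha h1)) (hb h2)
      -- the admissible `ω` form the single `a ⊓ b`-class of `ω₀`
      have : ∀ ω, (if a ω ω₁ then μ ω₁ else 0) * (if b ω ω₂ then μ ω₂ else 0) *
          (μ ω / (classWeight μ (a ⊓ b) ω * classWeight μ c ω))
          = (if (a ⊓ b) ω₀ ω then μ ω else 0) * (μ ω₁ * μ ω₂ /
            (classWeight μ (a ⊓ b) ω₀ * classWeight μ c ω₁)) := by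
        intro ω
        by_cases hω : (a ⊓ b) ω₀ ω
        · have hω' := (Setoid.inf_iff_and).1 hω
          have e1 : a ω ω₁ := a.trans (a.symm hω'.1) h1
          have e2 : b ω ω₂ := b.trans (b.symm hω'.2) h2
          rw [← classWeight_congr hω, classWeight_congr (ha e1)]
          simp only [e1, e2, hω, if_true]
          ring
        · have : ¬ (a ω ω₁ ∧ b ω ω₂) := fun h => hω (Setoid.inf_iff_and.2
            ⟨a.trans h1 (a.symm h.1), b.trans h2 (b.symm h.2)⟩)
          rw [if_neg hω]
          by_cases e1 : a ω ω₁
          · have e2 : ¬ b ω ω₂ := fun e => this ⟨e1, e⟩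
            simp [e2]
          · simp [e1]
      rw [Finset.sum_congr rfl fun ω _ => this ω, ← Finset.sum_mul, if_pos hc]
      change classWeight μ (a ⊓ b) ω₀ * _ ≤ _
      rw [show classWeight μ (a ⊓ b) ω₀ * (μ ω₁ * μ ω₂ /
            (classWeight μ (a ⊓ b) ω₀ * classWeight μ c ω₁))
          = (classWeight μ (a ⊓ b) ω₀ / classWeight μ (a ⊓ b) ω₀) *
            (μ ω₂ * (μ ω₁ / classWeight μ c ω₁)) by
        rw [div_eq_mul_inv, div_eq_mul_inv, div_eq_mul_inv, mul_inv]; ring]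
      exact mul_le_of_le_one_left (mul_nonneg (hμ _) (div_nonneg (hμ _) (h0 _ _)))
        (div_self_le_one _)
    · have : ∀ ω, (if a ω ω₁ then μ ω₁ else 0) * (if b ω ω₂ then μ ω₂ else 0) *
          (μ ω / (classWeight μ (a ⊓ b) ω * classWeight μ c ω)) = 0 := by
        intro ω
        by_cases e1 : a ω ω₁
        · have e2 : ¬ b ω ω₂ := fun e => hex ⟨ω, e1, e⟩
          simp [e2]
        · simp [e1]
      rw [Finset.sum_congr rfl fun ω _ => this ω, Finset.sum_const_zero]
      refine mul_nonneg ?_ (div_nonneg (hμ _) (h0 _ _))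
      split_ifs <;> simp [hμ]
  calc ∑ ω, μ ω * (classWeight μ a ω * classWeight μ b ω /
        (classWeight μ (a ⊓ b) ω * classWeight μ c ω))
      = ∑ ω, ∑ ω₁, ∑ ω₂, (if a ω ω₁ then μ ω₁ else 0) * (if b ω ω₂ then μ ω₂ else 0) *
        (μ ω / (classWeight μ (a ⊓ b) ω * classWeight μ c ω)) := by
        refine Finset.sum_congr rfl fun ω _ => ?_
        simp_rw [← Finset.sum_mul, ← Finset.mul_sum]
        rw [← Finset.sum_mul]
        change _ = classWeight μ a ω * classWeight μ b ω * _
        ring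
    _ = ∑ ω₁, ∑ ω₂, ∑ ω, (if a ω ω₁ then μ ω₁ else 0) * (if b ω ω₂ then μ ω₂ else 0) *
        (μ ω / (classWeight μ (a ⊓ b) ω * classWeight μ c ω)) := by
        rw [Finset.sum_comm]
        exact Finset.sum_congr rfl fun ω₁ _ => Finset.sum_comm
    _ ≤ ∑ ω₁, ∑ ω₂, (if c ω₁ ω₂ then μ ω₂ else 0) * (μ ω₁ / classWeight μ c ω₁) :=
        Finset.sum_le_sum fun ω₁ _ => Finset.sum_le_sum fun ω₂ _ => key ω₁ ω₂
    _ ≤ ∑ ω₁, μ ω₁ := by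
        refine Finset.sum_le_sum fun ω₁ _ => ?_
        rw [← Finset.sum_mul]
        change classWeight μ c ω₁ * _ ≤ _
        rw [mul_div_left_comm]
        exact mul_le_of_le_one_right (hμ _) (div_self_le_one _)

/-- Submodularity: `H(A, B) + H(C) ≤ H(A) + H(B)` when `C` is a function of `A` and of `B`. -/
lemma ent_submod (hμ : ∀ ω, 0 ≤ μ ω) {a b c : Setoid Ω} (ha : a ≤ c) (hb : b ≤ c) :
    ent μ (a ⊓ b) + ent μ c ≤ ent μ a + ent μ b := by
  have hl : 0 < Real.log 2 := Real.log_pos one_lt_two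
  -- `log t ≤ t - 1` applied to the ratio `t = p(a) p(b) / (p(a, b) p(c))`
  have hterm : ∀ ω, μ ω * Real.logb 2 (classWeight μ a ω) + μ ω * Real.logb 2 (classWeight μ b ω)
      - μ ω * Real.logb 2 (classWeight μ (a ⊓ b) ω) - μ ω * Real.logb 2 (classWeight μ c ω)
      ≤ (μ ω * (classWeight μ a ω * classWeight μ b ω /
      (classWeight μ (a ⊓ b) ω * classWeight μ c ω)) - μ ω) / Real.log 2 := by
    intro ω
    rcases (hμ ω).eq_or_lt with h0 | h0
    · simp [← h0]
    · have p1 := h0.trans_le (le_classWeight hμ a ω)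
      have p2 := h0.trans_le (le_classWeight hμ b ω)
      have p3 := h0.trans_le (le_classWeight hμ (a ⊓ b) ω)
      have p4 := h0.trans_le (le_classWeight hμ c ω)
      have := Real.log_le_sub_one_of_pos (div_pos (mul_pos p1 p2) (mul_pos p3 p4))
      rw [Real.log_div (by positivity) (by positivity), Real.log_mul p1.ne' p2.ne',
        Real.log_mul p3.ne' p4.ne'] at this
      rw [le_div_iff₀ hl]
      simp only [Real.logb]
      field_simp at this ⊢
      nlinarith
  have hs := Finset.sum_le_sum fun ω (_ : ω ∈ Finset.univ) => hterm ω
  rw [← Finset.sum_div, Finset.sum_sub_distrib, Finset.sum_sub_distrib, Finset.sum_sub_distrib,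
    Finset.sum_add_distrib] at hs
  have hr := sum_ratio_le hμ ha hb
  have : (∑ ω, μ ω * (classWeight μ a ω * classWeight μ b ω /
      (classWeight μ (a ⊓ b) ω * classWeight μ c ω)) - ∑ ω, μ ω) / Real.log 2 ≤ 0 :=
    div_nonpos_of_nonpos_of_nonneg (by linarith) hl.le
  simp only [ent]
  linarith

lemma ent_inf_le (hμ : ∀ ω, 0 ≤ μ ω) (hμ1 : ∑ ω, μ ω = 1) (a b : Setoid Ω) :
    ent μ (a ⊓ b) ≤ ent μ a + ent μ b := by
  have := ent_submod hμ (le_top : a ≤ ⊤) (le_top : b ≤ ⊤)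
  rw [ent_top hμ1] at this
  linarith

/-- Functions of independent variables are independent. -/
lemma ent_indep_mono (hμ : ∀ ω, 0 ≤ μ ω) (hμ1 : ∑ ω, μ ω = 1) {a b a' b' : Setoid Ω}
    (ha : a ≤ a') (hb : b ≤ b') (h : ent μ (a ⊓ b) = ent μ a + ent μ b) :
    ent μ (a' ⊓ b') = ent μ a' + ent μ b' := by
  have h1 := ent_submod hμ ha (inf_le_left : a' ⊓ b ≤ a')
  have h2 := ent_submod hμ hb (inf_le_right : a' ⊓ b' ≤ b')
  rw [← inf_assoc, inf_eq_left.2 ha] at h1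
  rw [show b ⊓ (a' ⊓ b') = a' ⊓ b by
    rw [inf_left_comm, inf_eq_left.2 hb]] at h2
  have h3 := ent_inf_le hμ hμ1 a' b'
  linarith

/-- Chain rule together with "conditioning reduces entropy":
`∑ i, H(z i | (z j)_{j ≠ i}, V) ≤ H((z i)_i | V)`. -/
lemma sum_ent_sub_erase_le (hμ : ∀ ω, 0 ≤ μ ω) {ι : Type*} [DecidableEq ι] (z : ι → Setoid Ω)
    (v : Setoid Ω) (I : Finset ι) :
    ∑ i ∈ I, (ent μ (I.inf z ⊓ v) - ent μ ((I.erase i).inf z ⊓ v))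
      ≤ ent μ (I.inf z ⊓ v) - ent μ v := by
  induction I using Finset.induction_on with
  | empty => simp
  | insert a I haI ih =>
    rw [Finset.sum_insert haI, Finset.erase_insert haI]
    have : ∀ i ∈ I, ent μ ((insert a I).inf z ⊓ v) - ent μ (((insert a I).erase i).inf z ⊓ v)
        ≤ ent μ (I.inf z ⊓ v) - ent μ ((I.erase i).inf z ⊓ v) := by
      intro i hi
      have hne : a ≠ i := fun h => haI (h ▸ hi)
      rw [Finset.erase_insert_of_ne hne, Finset.inf_insert, Finset.inf_insert]
      have hle : I.inf z ≤ (I.erase i).inf z := Finset.inf_mono (Finset.erase_subset _ _)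
      have h := ent_submod hμ (a := I.inf z ⊓ v) (b := z a ⊓ (I.erase i).inf z ⊓ v)
        (c := (I.erase i).inf z ⊓ v) (inf_le_inf_right _ hle)
        (inf_le_inf_right _ inf_le_right)
      rw [show I.inf z ⊓ v ⊓ (z a ⊓ (I.erase i).inf z ⊓ v) = z a ⊓ I.inf z ⊓ v by
        apply le_antisymm
        · exact le_inf (le_inf (inf_le_right.trans (inf_le_left.trans inf_le_left))
            (inf_le_left.trans inf_le_left)) (inf_le_left.trans inf_le_right)
        · exact le_inf (inf_le_inf_right _ inf_le_right)
            (inf_le_inf_right _ (inf_le_inf_left _ hle))] at h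
      linarith
    have := Finset.sum_le_sum this
    linarith

end Entropy

/-! ### Maximal entropy and independence -/

lemma Hent_le_log_card {Ω S : Type*} [Fintype Ω] [Fintype S] {μ : Ω → ℝ} (hμ : ∀ ω, 0 ≤ μ ω)
    (hμ1 : ∑ ω, μ ω = 1) (X : Ω → S) : Hent μ X ≤ Real.logb 2 (Fintype.card S) := by
  classical
  have hl : 0 < Real.log 2 := Real.log_pos one_lt_two
  have hsum : ∑ s, probOf μ X s = 1 := by
    rw [← hμ1, ← Finset.sum_fiberwise_of_maps_to (s := Finset.univ) (t := Finset.univ) (g := X)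
      (fun _ _ => Finset.mem_univ _)]
    refine Finset.sum_congr rfl fun s _ => ?_
    unfold probOf
    congr!
  have hS : 0 < Fintype.card S := by
    rcases Nat.eq_zero_or_pos (Fintype.card S) with h | h
    · have := Fintype.card_eq_zero_iff.1 h
      simp at hsum
    · exact h
  set n : ℝ := (Fintype.card S : ℝ) with hn
  have hn0 : 0 < n := Nat.cast_pos.2 hS
  -- `p log (1 / (n p)) ≤ 1 / n - p`
  have hterm : ∀ s, -(probOf μ X s * Real.logb 2 (probOf μ X s)) - probOf μ X s * Real.logb 2 n
      ≤ (n⁻¹ - probOf μ X s) / Real.log 2 := by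
    intro s
    have hp : 0 ≤ probOf μ X s := Finset.sum_nonneg fun _ _ => hμ _
    rw [le_div_iff₀ hl]
    rcases hp.eq_or_lt with h0 | h0
    · simp [← h0, hn0.le]
    · have := Real.log_le_sub_one_of_pos (inv_pos.2 (mul_pos hn0 h0))
      rw [Real.log_inv, Real.log_mul hn0.ne' h0.ne'] at this
      have h2 := mul_le_mul_of_nonneg_left this h0.le
      have h3 : probOf μ X s * ((n * probOf μ X s)⁻¹ - 1) = n⁻¹ - probOf μ X s := by
        field_simp
      have h4 : (-(probOf μ X s * Real.logb 2 (probOf μ X s)) - probOf μ X s * Real.logb 2 n)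
          * Real.log 2 = probOf μ X s * -(Real.log n + Real.log (probOf μ X s)) := by
        simp only [Real.logb]
        field_simp
        ring
      linarith
  have hs := Finset.sum_le_sum fun s (_ : s ∈ Finset.univ) => hterm s
  rw [← Finset.sum_div, Finset.sum_sub_distrib, Finset.sum_sub_distrib, ← Finset.sum_mul, hsum,
    Finset.sum_neg_distrib, Finset.sum_const, Finset.card_univ, nsmul_eq_mul, ← hn,
    mul_inv_cancel₀ hn0.ne'] at hs
  simp only [sub_self, zero_div] at hs
  unfold Hent
  linarith

lemma ent_indep_of_probOf {Ω S T : Type*} [Fintype Ω] {μ : Ω → ℝ} (hμ : ∀ ω, 0 ≤ μ ω)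
    (X : Ω → S) (Y : Ω → T)
    (h : ∀ s t, probOf μ (fun ω => (X ω, Y ω)) (s, t) = probOf μ X s * probOf μ Y t) :
    ent μ (Setoid.ker X ⊓ Setoid.ker Y) = ent μ (Setoid.ker X) + ent μ (Setoid.ker Y) := by
  rw [← ker_prod]
  unfold ent
  rw [← neg_add, ← Finset.sum_add_distrib]
  congr 1
  refine Finset.sum_congr rfl fun ω _ => ?_
  rcases (hμ ω).eq_or_lt with h0 | h0
  · simp [← h0]
  · rw [← probOf_eq_classWeight μ (fun ω => (X ω, Y ω)), h, probOf_eq_classWeight,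
      probOf_eq_classWeight, Real.logb_mul
        (h0.trans_le (le_classWeight hμ _ ω)).ne' (h0.trans_le (le_classWeight hμ _ ω)).ne']
    ring

/-! ### Dual total correlation -/

lemma ker_family {Ω ι : Type*} {β : ι → Type*} (Y : ∀ j, Ω → β j) (S : Finset ι) :
    Setoid.ker (fun ω (j : ↥S) => Y j.1 ω) = S.inf (fun j => Setoid.ker (Y j)) := by
  ext a b
  rw [finset_inf_rel, Setoid.ker_def, funext_iff, Subtype.forall]
  rfl

lemma sum_Icc_two_sub (f : ℕ → ℝ) (u : ℕ) (hu : 1 ≤ u) :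
    ∑ i ∈ Finset.Icc 2 u, (f i - f (i + 1)) = f 2 - f (u + 1) := by
  induction u, hu using Nat.le_induction with
  | base => simp
  | succ n hn ih =>
    rw [Finset.sum_Icc_succ_top (by omega), ih]
    ring

/-- The sum of conditional mutual informations along the chain is the dual total correlation
`H((z i)_i) - ∑ i, H(z i | (z j)_{j ≠ i})`; in particular it does not depend on the order. -/
lemma sum_cmi_eq {Ω : Type*} [Fintype Ω] {μ : Ω → ℝ} (hμ1 : ∑ ω, μ ω = 1) {β : ℕ → Type*}
    [∀ j, Fintype (β j)] (Y : ∀ j, Ω → β j) (u : ℕ) (hu : 1 ≤ u) :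
    ∑ i ∈ Finset.Icc 2 u, CMI μ (Y i)
        (fun ω (j : ↥(Finset.Icc 1 (i - 1))) => Y j.1 ω)
        (fun ω (j : ↥(Finset.Icc (i + 1) u)) => Y j.1 ω)
      = ent μ ((Finset.Icc 1 u).inf fun j => Setoid.ker (Y j))
        - ∑ i ∈ Finset.Icc 1 u, (ent μ ((Finset.Icc 1 u).inf fun j => Setoid.ker (Y j))
          - ent μ (((Finset.Icc 1 u).erase i).inf fun j => Setoid.ker (Y j))) := by
  set z : ℕ → Setoid Ω := fun j => Setoid.ker (Y j) with hz
  have hterm : ∀ i ∈ Finset.Icc 2 u, CMI μ (Y i)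
        (fun ω (j : ↥(Finset.Icc 1 (i - 1))) => Y j.1 ω)
        (fun ω (j : ↥(Finset.Icc (i + 1) u)) => Y j.1 ω)
      = (ent μ ((Finset.Icc i u).inf z) - ent μ ((Finset.Icc (i + 1) u).inf z))
        - (ent μ ((Finset.Icc 1 u).inf z) - ent μ (((Finset.Icc 1 u).erase i).inf z)) := by
    intro i hi
    rw [Finset.mem_Icc] at hi
    have e1 : Finset.Icc i u = insert i (Finset.Icc (i + 1) u) := by
      ext j; simp only [Finset.mem_Icc, Finset.mem_insert]; omega
    have e2 : (Finset.Icc 1 u).erase i = Finset.Icc 1 (i - 1) ∪ Finset.Icc (i + 1) u := by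
      ext j; simp only [Finset.mem_Icc, Finset.mem_erase, Finset.mem_union]; omega
    have e3 : Finset.Icc 1 u = insert i (Finset.Icc 1 (i - 1) ∪ Finset.Icc (i + 1) u) := by
      ext j; simp only [Finset.mem_Icc, Finset.mem_insert, Finset.mem_union]; omega
    rw [e2, e3, e1]
    simp only [CMI, Hcond, Hent_eq_ent, ker_prod, ker_family, Finset.inf_insert, Finset.inf_union]
    rfl
  rw [Finset.sum_congr rfl hterm, Finset.sum_sub_distrib,
    sum_Icc_two_sub (fun i => ent μ ((Finset.Icc i u).inf z)) u hu]
  have e4 : Finset.Icc 1 u = insert 1 (Finset.Icc 2 u) := by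
    ext j; simp only [Finset.mem_Icc, Finset.mem_insert]; omega
  have e5 : (Finset.Icc 1 u).erase 1 = Finset.Icc 2 u := by
    ext j; simp only [Finset.mem_Icc, Finset.mem_erase]; omega
  have e6 : Finset.Icc (u + 1) u = ∅ := Finset.Icc_eq_empty (by omega)
  have e7 : ∑ i ∈ Finset.Icc 1 u,
        (ent μ ((Finset.Icc 1 u).inf z) - ent μ (((Finset.Icc 1 u).erase i).inf z))
      = (ent μ ((Finset.Icc 1 u).inf z) - ent μ ((Finset.Icc 2 u).inf z))
        + ∑ i ∈ Finset.Icc 2 u,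
        (ent μ ((Finset.Icc 1 u).inf z) - ent μ (((Finset.Icc 1 u).erase i).inf z)) := by
    rw [← e5, ← Finset.add_sum_erase _ _
      (show 1 ∈ Finset.Icc 1 u from Finset.mem_Icc.2 ⟨le_rfl, hu⟩)]
  rw [e7]
  simp only [e6, Finset.inf_empty, ent_top hμ1]
  ring

/-- The entropy core. Here `z i`, `x i`, `w`, `σ` stand for the key and the message of user `i`,
the vector of inputs, and the sum of the inputs; `hcorr` and `hsec` are correctness and security, and
`hind` says that any `|I| - 1` of the messages are independent of the sum. The left side is
`∑ i, H(z i | (z j)_{j ≠ i})`. -/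
lemma dual_total_correlation_bound {Ω : Type*} [Fintype Ω] {μ : Ω → ℝ} (hμ : ∀ ω, 0 ≤ μ ω)
    (hμ1 : ∑ ω, μ ω = 1) {ι : Type*} [DecidableEq ι] (I : Finset ι) (z x : ι → Setoid Ω)
    (w σ : Setoid Ω)
    (hzw : ent μ (I.inf z ⊓ w) = ent μ (I.inf z) + ent μ w)
    (hx : ∀ i ∈ I, z i ⊓ w ≤ x i) (hwσ : w ≤ σ)
    (hcorr : ent μ (σ ⊓ I.inf x) = ent μ (I.inf x))
    (hsec : ent μ (w ⊓ σ) - ent μ σ - (ent μ (w ⊓ (I.inf x ⊓ σ)) - ent μ (I.inf x ⊓ σ)) = 0)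
    (hind : ∀ i ∈ I, ent μ ((I.erase i).inf x ⊓ σ) = ent μ ((I.erase i).inf x) + ent μ σ) :
    ∑ i ∈ I, (ent μ (I.inf z) - ent μ ((I.erase i).inf z))
      ≤ ent μ (I.inf z) - ((I.card : ℝ) - 1) * ent μ σ := by
  have hzx : ∀ T ⊆ I, T.inf z ⊓ w ≤ T.inf x := fun T hT => Finset.le_inf fun i hi =>
    (inf_le_inf_right _ (Finset.inf_le hi)).trans (hx i (hT hi))
  -- `H(X, W) = H(X) + H(W) - H(σ)`
  have hxw : ent μ (I.inf x ⊓ w) = ent μ (I.inf x) + ent μ w - ent μ σ := by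
    rw [inf_eq_left.2 hwσ, inf_left_comm, inf_eq_left.2 hwσ, inf_comm (I.inf x) σ, hcorr] at hsec
    linarith
  -- the first bracket is `H(x i | other messages)`, the second `H(z i | other keys, X, W)`
  have hterm : ∀ i ∈ I, ent μ (I.inf z) - ent μ ((I.erase i).inf z)
      ≤ (ent μ (I.inf x ⊓ ⊤) - ent μ ((I.erase i).inf x ⊓ ⊤)) - ent μ σ
        + (ent μ (I.inf z ⊓ (I.inf x ⊓ w)) - ent μ ((I.erase i).inf z ⊓ (I.inf x ⊓ w))) := by
    intro i hi
    have hsub : I.erase i ⊆ I := Finset.erase_subset _ _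
    have hxle : I.inf x ≤ (I.erase i).inf x := Finset.inf_mono hsub
    -- the messages of all users but `i` are independent of the inputs
    have h1 := ent_submod hμ (a := (I.erase i).inf x ⊓ w) (b := I.inf x ⊓ σ)
      (c := (I.erase i).inf x ⊓ σ) (inf_le_inf_left _ hwσ) (inf_le_inf_right _ hxle)
    rw [show (I.erase i).inf x ⊓ w ⊓ (I.inf x ⊓ σ) = I.inf x ⊓ w by
      rw [inf_inf_inf_comm, inf_eq_left.2 hwσ, inf_eq_right.2 hxle], hind i hi, hxw,
      inf_comm (I.inf x) σ, hcorr] at h1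
    -- `I((z j)_{j ≠ i}; x i | (x j)_{j ≠ i}, W) ≥ 0`
    have h2 := ent_submod hμ (a := (I.erase i).inf z ⊓ w) (b := I.inf x ⊓ w)
      (c := (I.erase i).inf x ⊓ w) (le_inf (hzx _ hsub) inf_le_right)
      (inf_le_inf_right _ hxle)
    rw [inf_inf_inf_comm, inf_idem, inf_assoc, hxw] at h2
    have h3 := ent_inf_le hμ hμ1 ((I.erase i).inf x) w
    have h4 : I.inf z ⊓ (I.inf x ⊓ w) = I.inf z ⊓ w := by
      rw [inf_left_comm, inf_eq_right.2 (hzx I subset_rfl)]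
    have h5 := ent_indep_mono hμ hμ1 (Finset.inf_mono hsub : I.inf z ≤ (I.erase i).inf z)
      (le_refl w) hzw
    rw [h4, hzw, inf_top_eq, inf_top_eq]
    linarith
  have hs := Finset.sum_le_sum hterm
  -- both brackets are summed by the chain rule
  have c1 := sum_ent_sub_erase_le hμ x ⊤ I
  have c2 := sum_ent_sub_erase_le hμ z (I.inf x ⊓ w) I
  rw [show I.inf z ⊓ (I.inf x ⊓ w) = I.inf z ⊓ w by
      rw [inf_left_comm, inf_eq_right.2 (hzx I subset_rfl)], hzw, hxw] at c2
  rw [ent_top hμ1, inf_top_eq] at c1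
  rw [show I.inf z ⊓ (I.inf x ⊓ w) = I.inf z ⊓ w by
      rw [inf_left_comm, inf_eq_right.2 (hzx I subset_rfl)], hzw, inf_top_eq] at hs
  simp only [Finset.sum_add_distrib, Finset.sum_sub_distrib, Finset.sum_const, nsmul_eq_mul]
    at hs c1 c2 ⊢
  linarith

/-! ### Uniform inputs -/

lemma ent_of_uniform {Ω S : Type*} [Fintype Ω] [Fintype S] [Nonempty S] {μ : Ω → ℝ} (X : Ω → S)
    (h : ∀ s, probOf μ X s = (Fintype.card S : ℝ)⁻¹) :
    ent μ (Setoid.ker X) = Real.logb 2 (Fintype.card S) := by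
  have : (Fintype.card S : ℝ) ≠ 0 := Nat.cast_ne_zero.2 Fintype.card_ne_zero
  rw [← Hent_eq_ent, Hent]
  simp only [h, Finset.sum_const, Finset.card_univ, nsmul_eq_mul, Real.logb_inv]
  field_simp

/-- For uniform inputs independent of the variable `ζ`, the partial sum over `U ∋ k₀` is uniform and
independent of `ζ` together with all inputs but that of `k₀`. -/
lemma sum_uniform_indep {K L : ℕ} {F : Type*} [Field F] [Fintype F] {Ω : Type*} [Fintype Ω]
    {μ : Ω → ℝ} (hμ : ∀ ω, 0 ≤ μ ω) (hμ1 : ∑ ω, μ ω = 1) (W : Fin K → Ω → (Fin L → F))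
    (hW : ∀ w : Fin K → Fin L → F, probOf μ (fun ω (k : Fin K) => W k ω) w
      = ((Fintype.card F : ℝ) ^ (L * K))⁻¹)
    (ζ : Setoid Ω)
    (hζ : ent μ (Setoid.ker (fun ω (k : Fin K) => W k ω) ⊓ ζ)
      = ent μ (Setoid.ker (fun ω (k : Fin K) => W k ω)) + ent μ ζ)
    (U : Finset (Fin K)) (k₀ : Fin K) (hk₀ : k₀ ∈ U) :
    ent μ (Setoid.ker fun ω => ∑ k ∈ U, W k ω) = (L : ℝ) * Real.logb 2 (Fintype.card F) ∧
    ent μ ((Setoid.ker (fun ω (k : {k : Fin K // k ≠ k₀}) => W k.1 ω) ⊓ ζ)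
        ⊓ Setoid.ker fun ω => ∑ k ∈ U, W k ω)
      = ent μ (Setoid.ker (fun ω (k : {k : Fin K // k ≠ k₀}) => W k.1 ω) ⊓ ζ)
        + ent μ (Setoid.ker fun ω => ∑ k ∈ U, W k ω) := by
  classical
  set wf := Setoid.ker (fun ω (k : Fin K) => W k ω) with hwf
  set wr := Setoid.ker (fun ω (k : {k : Fin K // k ≠ k₀}) => W k.1 ω) with hwr
  set σ := Setoid.ker fun ω => ∑ k ∈ U, W k ω with hσ
  have hK : 1 ≤ K := k₀.pos
  have hcardW : (Fintype.card (Fin K → Fin L → F) : ℝ) = (Fintype.card F : ℝ) ^ (L * K) := by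
    simp [pow_mul]
  have h1 : ent μ wf = (L : ℝ) * K * Real.logb 2 (Fintype.card F) := by
    rw [hwf, ent_of_uniform _ (by rw [hcardW]; exact hW), hcardW, Real.logb_pow]
    push_cast
    ring
  have h2 : ent μ σ ≤ (L : ℝ) * Real.logb 2 (Fintype.card F) := by
    have := Hent_le_log_card hμ hμ1 (fun ω => ∑ k ∈ U, W k ω)
    rw [Hent_eq_ent] at this
    simpa [Real.logb_pow] using this
  have h3 : ent μ wr ≤ (L : ℝ) * (K - 1) * Real.logb 2 (Fintype.card F) := by
    have := Hent_le_log_card hμ hμ1 (fun ω (k : {k : Fin K // k ≠ k₀}) => W k.1 ω)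
    rw [Hent_eq_ent] at this
    have hc : (Fintype.card ({k : Fin K // k ≠ k₀} → Fin L → F) : ℝ)
        = (Fintype.card F : ℝ) ^ (L * (K - 1)) := by
      simp [pow_mul, Fintype.card_subtype_compl]
    rw [hc, Real.logb_pow] at this
    push_cast [Nat.cast_sub hK] at this
    exact this
  have h4 : σ ⊓ wr ≤ wf := by
    intro a b hab
    obtain ⟨ha, hb⟩ := Setoid.inf_iff_and.1 hab
    have hb' : ∀ k, k ≠ k₀ → W k a = W k b := fun k hk => congrFun hb ⟨k, hk⟩
    have ha' : ∑ k ∈ U, W k a = ∑ k ∈ U, W k b := ha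
    rw [← Finset.add_sum_erase _ _ hk₀, ← Finset.add_sum_erase _ _ hk₀,
      Finset.sum_congr rfl fun k hk => hb' k (Finset.ne_of_mem_erase hk)] at ha'
    refine funext fun k => ?_
    by_cases hk : k = k₀
    · rw [hk]; exact add_right_cancel ha'
    · exact hb' k hk
  have h5 : wf ≤ σ := fun a b hab =>
    Finset.sum_congr rfl fun k _ => congrFun (show _ = _ from hab) k
  have h6 : wf ≤ wr := fun a b hab => funext fun k => congrFun (show _ = _ from hab) k.1
  have h7 : σ ⊓ wr = wf := le_antisymm h4 (le_inf h5 h6)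
  have h8 := ent_inf_le hμ hμ1 σ wr
  rw [h7] at h8
  have h9 : ent μ σ = (L : ℝ) * Real.logb 2 (Fintype.card F) := by
    refine le_antisymm h2 ?_
    nlinarith
  refine ⟨h9, le_antisymm (ent_inf_le hμ hμ1 _ _) ?_⟩
  rw [inf_right_comm, inf_comm wr σ, h7, hζ]
  have := ent_inf_le hμ hμ1 wr ζ
  nlinarith

/-- Lemma 4, inequality (25) of the paper: in K-user secure summation with user selection,
for a selected set U = {k_1,…,k_{|U|}} with |U| ≥ 2,
Σ_{i∈[2:|U|]} I(Z_{k_i}; (Z_{k_j})_{j∈[i−1]} | (Z_{k_j})_{j∈[i+1:|U|]}) ≥ (|U|−1)·L·log₂ q. -/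
theorem secure_summation_cmi_sum_bound
    (K L q : ℕ) (hK : 1 ≤ K) (hL : 1 ≤ L) (hq : IsPrimePow q)
    (F : Type) [Field F] [Fintype F] (hF : Fintype.card F = q)
    (Ω : Type) [Fintype Ω] (μ : Ω → ℝ)
    (hμ0 : ∀ ω, 0 ≤ μ ω) (hμ1 : (∑ ω, μ ω) = 1)
    (SZ : Fin K → Type) [∀ k, Fintype (SZ k)]
    (M : Finset (Fin K) → Fin K → Type) [∀ U k, Fintype (M U k)]
    (W : Fin K → Ω → (Fin L → F)) (Z : ∀ k : Fin K, Ω → SZ k)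
    (X : ∀ (U : Finset (Fin K)) (k : Fin K), Ω → M U k)
    -- the inputs W_1, …, W_K are i.i.d. uniform over F_q^L
    (hWunif : ∀ w : Fin K → Fin L → F,
      probOf μ (fun ω (k : Fin K) => W k ω) w = ((q : ℝ) ^ (L * K))⁻¹)
    -- (W_1,…,W_K) is independent of (Z_1,…,Z_K)
    (hWZind : ∀ (w : Fin K → Fin L → F) (z : ∀ k : Fin K, SZ k),
      probOf μ (fun ω => ((fun k : Fin K => W k ω), (fun k : Fin K => Z k ω))) (w, z)
        = probOf μ (fun ω (k : Fin K) => W k ω) w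
            * probOf μ (fun ω (k : Fin K) => Z k ω) z)
    -- each message X_k^U is a deterministic function of (W_k, Z_k)
    (hXdet : ∀ (U : Finset (Fin K)) (k : Fin K), k ∈ U →
      ∃ f : (Fin L → F) → SZ k → M U k, ∀ ω, X U k ω = f (W k ω) (Z k ω))
    -- correctness: H(Σ_{k∈U} W_k | (X_k^U)_{k∈U}) = 0
    (hcorr : ∀ U : Finset (Fin K),
      Hcond μ (fun ω => ∑ k ∈ U, W k ω) (fun ω (k : ↥U) => X U k.1 ω) = 0)
    -- security: I((W_k)_{k∈U}; (X_k^U)_{k∈U} | Σ_{k∈U} W_k) = 0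
    (hsec : ∀ U : Finset (Fin K),
      CMI μ (fun ω (k : ↥U) => W k.1 ω) (fun ω (k : ↥U) => X U k.1 ω)
        (fun ω => ∑ k ∈ U, W k ω) = 0) :
    ∀ (u : ℕ) (hu : 2 ≤ u) (idx : ℕ → Fin K),
      Set.InjOn idx (Finset.Icc 1 u) →
      (∑ i ∈ Finset.Icc 2 u,
        CMI μ (Z (idx i))
          (fun ω (j : ↥(Finset.Icc 1 (i - 1))) => Z (idx j.1) ω)
          (fun ω (j : ↥(Finset.Icc (i + 1) u)) => Z (idx j.1) ω))
      ≥ ((u : ℝ) - 1) * ((L : ℝ) * Real.logb 2 q) := by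
  classical
  intro u hu idx hinj
  subst hF
  set I := Finset.Icc 1 u with hI
  set U := I.image idx with hU
  have hinj' : Set.InjOn idx I := hinj
  have hmem : ∀ i ∈ I, idx i ∈ U := fun i hi => Finset.mem_image_of_mem _ hi
  set wf := Setoid.ker (fun ω (k : Fin K) => W k ω) with hwf
  set zf := Setoid.ker (fun ω (k : Fin K) => Z k ω) with hzf
  set w := Setoid.ker (fun ω (k : ↥U) => W k.1 ω) with hw
  set σ := Setoid.ker (fun ω => ∑ k ∈ U, W k ω) with hσ
  set z : ℕ → Setoid Ω := fun j => Setoid.ker (Z (idx j)) with hz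
  set x : ℕ → Setoid Ω := fun j => Setoid.ker (X U (idx j)) with hx
  have hWZ : ent μ (wf ⊓ zf) = ent μ wf + ent μ zf := ent_indep_of_probOf hμ0 _ _ hWZind
  have hzfz : zf ≤ I.inf z := Finset.le_inf fun i _ a b hab =>
    congrFun (show _ = _ from hab) (idx i)
  have hwfw : wf ≤ w := fun a b hab => funext fun k => congrFun (show _ = _ from hab) k.1
  have hzw : ent μ (I.inf z ⊓ w) = ent μ (I.inf z) + ent μ w :=
    ent_indep_mono hμ0 hμ1 hzfz hwfw (by rw [inf_comm, hWZ, add_comm])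
  have hxU : Setoid.ker (fun ω (k : ↥U) => X U k.1 ω) = I.inf x := by
    rw [ker_family (fun k => X U k) U, hU, Finset.inf_image]
    rfl
  have hxdet : ∀ i ∈ I, z i ⊓ w ≤ x i := by
    intro i hi a b hab
    obtain ⟨h1, h2⟩ := Setoid.inf_iff_and.1 hab
    obtain ⟨f, hf⟩ := hXdet U (idx i) (hmem i hi)
    have h1' : Z (idx i) a = Z (idx i) b := h1
    have h2' : W (idx i) a = W (idx i) b := congrFun (show _ = _ from h2) ⟨idx i, hmem i hi⟩
    change X U (idx i) a = X U (idx i) b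
    rw [hf, hf, h1', h2']
  have hwσ : w ≤ σ := fun a b hab =>
    Finset.sum_congr rfl fun k hk => congrFun (show _ = _ from hab) ⟨k, hk⟩
  have hc := hcorr U
  simp only [Hcond, Hent_eq_ent, ker_prod, hxU] at hc
  have hs := hsec U
  simp only [CMI, Hcond, Hent_eq_ent, ker_prod, hxU] at hs
  have hpart : ∀ i ∈ I, _ := fun i hi =>
    sum_uniform_indep hμ0 hμ1 W hWunif zf hWZ U (idx i) (hmem i hi)
  have hind : ∀ i ∈ I, ent μ ((I.erase i).inf x ⊓ σ) = ent μ ((I.erase i).inf x) + ent μ σ := by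
    intro i hi
    refine ent_indep_mono hμ0 hμ1 (Finset.le_inf fun j hj a b hab => ?_) le_rfl (hpart i hi).2
    obtain ⟨h1, h2⟩ := Setoid.inf_iff_and.1 hab
    obtain ⟨hne, hj⟩ := Finset.mem_erase.1 hj
    obtain ⟨f, hf⟩ := hXdet U (idx j) (hmem j hj)
    have h1' : W (idx j) a = W (idx j) b :=
      congrFun (show _ = _ from h1) ⟨idx j, fun h => hne (hinj' hj hi h)⟩
    have h2' : Z (idx j) a = Z (idx j) b := congrFun (show _ = _ from h2) (idx j)
    change X U (idx j) a = X U (idx j) b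
    rw [hf, hf, h1', h2']
  have hmain := dual_total_correlation_bound hμ0 hμ1 I z x w σ hzw hxdet hwσ
    (sub_eq_zero.1 hc) hs hind
  rw [(hpart 1 (Finset.mem_Icc.2 ⟨le_rfl, by omega⟩)).1, hI, Nat.card_Icc,
    Nat.add_sub_cancel] at hmain
  rw [sum_cmi_eq hμ1 (fun j => Z (idx j)) u (by omega)]
  linarith
end

section
/- Consider K-user secure summation with user selection over F_q with inputs of length L. Let U = {k_1, k_2, …, k_{|U|}} ⊆ [K] with |U| ≥ 2, and let S_{|U|} be the set of all permutations of {1,…,|U|}. Then (1/|U|!)·Σ_{π∈S_{|U|}} I(Z_{k_{π(1)}}; (Z_{k_{π(j)}})_{j∈{2,…,|U|}}) ≥ (1 + 1/2 + ⋯ + 1/(|U|−1))·L·log₂ q. -/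
/-!
Write `H` for entropy, `ℓ = L log₂ q`, and `Z_B = (Z_k)_{k ∈ B}`. Two facts give the bound.

The first (`key_bound`) is that for every nonempty `B` the dual total correlation of the keys
satisfies `H(Z_B) - ∑_{i ∈ B} H(Z_i | Z_{B∖i}) ≥ (|B| - 1) ℓ`. With `X_i = X_i^B`, the inequality
`H(Z_B | X_B, W_B) ≥ ∑ H(Z_i | Z_{B∖i}, X_B, W_B)` (`sum_erase_le`) reduces it to comparing
`H(X_B | W_B)` with `∑ H(X_i | Z_{B∖i}, W_B)`. By security and correctness
`H(X_B | W_B) = H(X_B) - H(∑ W_k) ≥ H(X_B) - ℓ`. By correctness `X_i` together with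
`(Z_{B∖i}, W_{B∖i})` reveals `W_i`, so
`H(X_i | Z_{B∖i}, W_B) = H(X_i | Z_{B∖i}, W_{B∖i}) - ℓ ≤ H(X_i | X_{B∖i}) - ℓ`; finally
`∑ H(X_i | X_{B∖i}) ≤ H(X_B)`.

The second (`average_bound`) is averaging. Let `h m` be the average of `H(Z_B)` over the `m`-subsets
`B` of the selected set. The first fact becomes `h (m-1) / (m-1) - h m / m ≥ ℓ / m`; summing over
`m = 2, …, u` gives `h 1 - h u / u ≥ (1/2 + ⋯ + 1/u) ℓ`, and the case `m = u` gives
`h (u-1) - h u ≥ - h u / u + (1 - 1/u) ℓ`. The averaged mutual information is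
`h 1 + h (u-1) - h u`, and adding the two inequalities gives the harmonic sum.

Since the entropy of a random variable depends only on the partition of `Ω` it generates, entropies
are computed in the lattice `Setoid Ω`, where joint variables are infima (`Hent_eq_partEnt`); the
Shannon inequalities are monotonicity (`partEnt_anti`) and submodularity (`partEnt_submod`).
-/

open scoped BigOperators

/-! ### Entropy of partitions of a finite probability space -/

section Entropy

variable {Ω : Type*}

/-- The partition of `Ω` generated jointly by the variables `Y k`, `k ∈ B`. -/
def jointKer {κ : Type*} {S : κ → Type*} (Y : ∀ k, Ω → S k) (B : Finset κ) : Setoid Ω where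
  r a b := ∀ k ∈ B, Y k a = Y k b
  iseqv := ⟨fun _ _ _ => rfl, fun h k hk => (h k hk).symm,
    fun h h' k hk => (h k hk).trans (h' k hk)⟩

theorem jointKer_rel {κ : Type*} {S : κ → Type*} (Y : ∀ k, Ω → S k) (B : Finset κ) (a b : Ω) :
    jointKer Y B a b ↔ ∀ k ∈ B, Y k a = Y k b := Iff.rfl

theorem inf_rel (r s : Setoid Ω) (a b : Ω) : (r ⊓ s) a b ↔ r a b ∧ s a b := Iff.rfl

theorem jointKer_anti {κ : Type*} {S : κ → Type*} (Y : ∀ k, Ω → S k) {A B : Finset κ} (h : A ⊆ B) :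
    jointKer Y B ≤ jointKer Y A :=
  fun _ _ hab k hk => hab k (h hk)

theorem jointKer_union {κ : Type*} [DecidableEq κ] {S : κ → Type*} (Y : ∀ k, Ω → S k) (A B : Finset κ) :
    jointKer Y (A ∪ B) = jointKer Y A ⊓ jointKer Y B := by
  ext a b
  simp only [jointKer_rel, inf_rel, Finset.mem_union]
  exact ⟨fun h => ⟨fun k hk => h k (.inl hk), fun k hk => h k (.inr hk)⟩,
    fun h k hk => hk.elim (h.1 k) (h.2 k)⟩

variable [Fintype Ω]

open Classical in
/-- The probability of the cell of the partition `r` that contains `ω`. -/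
noncomputable def cellMass (μ : Ω → ℝ) (r : Setoid Ω) (ω : Ω) : ℝ :=
  ∑ ω', if r ω' ω then μ ω' else 0

/-- Shannon entropy (in bits) of a partition of `Ω`, given as an equivalence relation. The joint
entropy of several partitions is the entropy of their infimum, and `r ≤ s` says that `r`
determines `s`. -/
noncomputable def partEnt (μ : Ω → ℝ) (r : Setoid Ω) : ℝ :=
  (- ∑ ω, μ ω * Real.log (cellMass μ r ω)) / Real.log 2

theorem cellMass_ker (μ : Ω → ℝ) {S : Type*} (X : Ω → S) (ω : Ω) :
    cellMass μ (Setoid.ker X) ω = probOf μ X (X ω) := by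
  classical
  unfold cellMass probOf
  rw [Finset.sum_filter]
  refine Finset.sum_congr rfl fun ω' _ => ?_
  simp only [Setoid.ker_def]

theorem Hent_eq_partEnt (μ : Ω → ℝ) {S : Type*} [Fintype S] (X : Ω → S) :
    Hent μ X = partEnt μ (Setoid.ker X) := by
  classical
  unfold Hent partEnt
  rw [neg_div, Finset.sum_div, neg_inj]
  rw [← Finset.sum_fiberwise Finset.univ X]
  refine Finset.sum_congr rfl fun s _ => ?_
  have h1 : probOf μ X s = ∑ ω with X ω = s, μ ω := by
    unfold probOf
    exact Finset.sum_congr (by ext; simp) fun _ _ => rfl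
  conv_lhs => rw [h1, Finset.sum_mul]
  refine Finset.sum_congr rfl fun ω hω => ?_
  rw [Finset.mem_filter] at hω
  rw [cellMass_ker, hω.2, ← h1, Real.logb, mul_div_assoc]

theorem le_cellMass {μ : Ω → ℝ} (h0 : ∀ ω, 0 ≤ μ ω) (r : Setoid Ω) (ω : Ω) :
    μ ω ≤ cellMass μ r ω := by
  classical
  unfold cellMass
  have := Finset.single_le_sum (f := fun ω' => if r ω' ω then μ ω' else 0)
    (fun i _ => by split_ifs <;> simp [h0]) (Finset.mem_univ ω)
  simpa [r.refl' ω] using this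

theorem cellMass_nonneg {μ : Ω → ℝ} (h0 : ∀ ω, 0 ≤ μ ω) (r : Setoid Ω) (ω : Ω) :
    0 ≤ cellMass μ r ω := (h0 ω).trans (le_cellMass h0 r ω)

theorem cellMass_congr (μ : Ω → ℝ) (r : Setoid Ω) {a b : Ω} (h : r a b) :
    cellMass μ r a = cellMass μ r b := by
  classical
  unfold cellMass
  refine Finset.sum_congr rfl fun ω' _ => ?_
  have : r ω' a ↔ r ω' b := ⟨fun h' => r.trans' h' h, fun h' => r.trans' h' (r.symm' h)⟩
  simp only [this]

theorem cellMass_mono {μ : Ω → ℝ} (h0 : ∀ ω, 0 ≤ μ ω) {r s : Setoid Ω} (h : r ≤ s) (ω : Ω) :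
    cellMass μ r ω ≤ cellMass μ s ω := by
  classical
  unfold cellMass
  refine Finset.sum_le_sum fun ω' _ => ?_
  by_cases h1 : r ω' ω
  · simp [h1, h h1]
  · simp only [h1, if_false]
    split_ifs <;> simp [h0]

/-- A coarser partition has smaller entropy. -/
theorem partEnt_anti {μ : Ω → ℝ} (h0 : ∀ ω, 0 ≤ μ ω) {r s : Setoid Ω} (h : r ≤ s) :
    partEnt μ s ≤ partEnt μ r := by
  unfold partEnt
  refine div_le_div_of_nonneg_right ?_ (Real.log_nonneg (by norm_num))
  refine neg_le_neg (Finset.sum_le_sum fun ω _ => ?_)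
  rcases (h0 ω).eq_or_lt with h1 | h1
  · simp [← h1]
  · exact mul_le_mul_of_nonneg_left (Real.log_le_log (h1.trans_le (le_cellMass h0 r ω))
      (cellMass_mono h0 h ω)) h1.le

/-- Weighting each point by `μ ω / cellMass μ r ω`, a set contained in a single cell of `r` has
weight at most `1`; null cells have weight `0` because of division by zero. -/
theorem sum_cell_div_le {μ : Ω → ℝ} (r : Setoid Ω) (P : Ω → Prop) [DecidablePred P]
    (h0 : ∀ ω, 0 ≤ μ ω) (hP : ∀ a b, P a → P b → r a b) :
    (∑ ω, if P ω then μ ω / cellMass μ r ω else 0) ≤ 1 := by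
  classical
  by_cases hne : ∃ a, P a
  · obtain ⟨a, ha⟩ := hne
    calc (∑ ω, if P ω then μ ω / cellMass μ r ω else 0)
        ≤ ∑ ω, (if r ω a then μ ω else 0) / cellMass μ r a := by
          refine Finset.sum_le_sum fun ω _ => ?_
          by_cases h : P ω
          · simp [h, hP ω a h ha, cellMass_congr μ r (hP ω a h ha)]
          · simp only [h, if_false]
            refine div_nonneg ?_ (cellMass_nonneg h0 r a)
            split_ifs <;> simp [h0]
      _ = cellMass μ r a / cellMass μ r a := by
          rw [← Finset.sum_div]; rfl
      _ ≤ 1 := div_self_le_one _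
  · push Not at hne
    simp [hne]

/-- Submodularity of entropy, i.e. nonnegativity of conditional mutual information. -/
theorem partEnt_submod {μ : Ω → ℝ} (h0 : ∀ ω, 0 ≤ μ ω) (h1 : ∑ ω, μ ω = 1) {a b c : Setoid Ω}
    (hac : a ≤ c) (hbc : b ≤ c) :
    partEnt μ (a ⊓ b) + partEnt μ c ≤ partEnt μ a + partEnt μ b := by
  classical
  unfold partEnt
  rw [← add_div, ← add_div]
  refine div_le_div_of_nonneg_right ?_ (Real.log_nonneg (by norm_num))
  -- Gibbs' inequality: the claim is `∑ μ log ratio ≤ 0`, and `log t ≤ t - 1`, so it is enough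
  -- that `∑ μ ratio ≤ 1`
  let ratio : Ω → ℝ := fun ω =>
    cellMass μ a ω * cellMass μ b ω / (cellMass μ c ω * cellMass μ (a ⊓ b) ω)
  have key : ∑ ω, μ ω * ratio ω ≤ 1 := by
    have e1 : ∀ ω, μ ω * ratio ω = ∑ x, ∑ y, μ x * μ y *
        (if a x ω ∧ b y ω then μ ω / cellMass μ (a ⊓ b) ω / cellMass μ c ω else 0) := by
      intro ω
      have : μ ω * ratio ω = (cellMass μ a ω * cellMass μ b ω) *
          (μ ω / cellMass μ (a ⊓ b) ω / cellMass μ c ω) := by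
        simp only [ratio]
        rw [div_div, mul_div_assoc', mul_div_assoc', mul_comm (cellMass μ c ω)]
        ring
      rw [this]
      conv_lhs => unfold cellMass
      rw [Finset.sum_mul_sum, Finset.sum_mul]
      refine Finset.sum_congr rfl fun x _ => ?_
      rw [Finset.sum_mul]
      refine Finset.sum_congr rfl fun y _ => ?_
      by_cases hx : a x ω <;> by_cases hy : b y ω <;> simp [hx, hy, cellMass]
    have e2 : ∀ x y, (∑ ω, if a x ω ∧ b y ω then
        μ ω / cellMass μ (a ⊓ b) ω / cellMass μ c ω else 0) ≤
        (if c y x then 1 else 0) / cellMass μ c x := by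
      intro x y
      by_cases hxy : c y x
      · have : ∀ ω, (if a x ω ∧ b y ω then
            μ ω / cellMass μ (a ⊓ b) ω / cellMass μ c ω else 0) =
            (if a x ω ∧ b y ω then μ ω / cellMass μ (a ⊓ b) ω else 0) / cellMass μ c x := by
          intro ω
          by_cases h : a x ω ∧ b y ω
          · simp [h, cellMass_congr μ c (hac h.1)]
          · simp [h]
        simp only [this, hxy, if_true]
        rw [← Finset.sum_div]
        refine div_le_div_of_nonneg_right ?_ (cellMass_nonneg h0 c x)
        refine sum_cell_div_le (a ⊓ b) _ h0 fun p q hp hq => ?_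
        exact ⟨a.trans' (a.symm' hp.1) hq.1, b.trans' (b.symm' hp.2) hq.2⟩
      · have : ∀ ω, ¬ (a x ω ∧ b y ω) := fun ω h =>
          hxy (c.trans' (hbc h.2) (c.symm' (hac h.1)))
        simp [this, hxy]
    calc ∑ ω, μ ω * ratio ω
        = ∑ x, ∑ y, μ x * μ y * ∑ ω, (if a x ω ∧ b y ω then
            μ ω / cellMass μ (a ⊓ b) ω / cellMass μ c ω else 0) := by
          simp only [e1, Finset.mul_sum]
          rw [Finset.sum_comm]
          refine Finset.sum_congr rfl fun x _ => ?_
          rw [Finset.sum_comm]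
      _ ≤ ∑ x, ∑ y, μ x * μ y * ((if c y x then 1 else 0) / cellMass μ c x) :=
          Finset.sum_le_sum fun x _ => Finset.sum_le_sum fun y _ =>
            mul_le_mul_of_nonneg_left (e2 x y) (mul_nonneg (h0 x) (h0 y))
      _ = ∑ x, μ x * (cellMass μ c x / cellMass μ c x) := by
          refine Finset.sum_congr rfl fun x _ => ?_
          conv_rhs => rw [cellMass, Finset.sum_div, Finset.mul_sum]
          refine Finset.sum_congr rfl fun y _ => ?_
          split_ifs <;> simp [cellMass]
          ring
      _ ≤ ∑ x, μ x := Finset.sum_le_sum fun x _ =>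
          mul_le_of_le_one_right (h0 x) (div_self_le_one _)
      _ = 1 := h1
  have pt : ∀ ω, μ ω * Real.log (cellMass μ a ω) + μ ω * Real.log (cellMass μ b ω)
      ≤ μ ω * Real.log (cellMass μ (a ⊓ b) ω) + μ ω * Real.log (cellMass μ c ω)
        + (μ ω * ratio ω - μ ω) := by
    intro ω
    rcases (h0 ω).eq_or_lt with h | h
    · simp [← h]
    · have pa := h.trans_le (le_cellMass h0 a ω)
      have pb := h.trans_le (le_cellMass h0 b ω)
      have pc := h.trans_le (le_cellMass h0 c ω)
      have pd := h.trans_le (le_cellMass h0 (a ⊓ b) ω)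
      have hl := Real.log_le_sub_one_of_pos (x := ratio ω)
        (div_pos (mul_pos pa pb) (mul_pos pc pd))
      simp only [ratio] at hl ⊢
      rw [Real.log_div (by positivity) (by positivity), Real.log_mul pa.ne' pb.ne',
        Real.log_mul pc.ne' pd.ne'] at hl
      have := mul_le_mul_of_nonneg_left hl h.le
      linarith
  have := Finset.sum_le_sum fun ω (_ : ω ∈ Finset.univ) => pt ω
  simp only [Finset.sum_add_distrib, Finset.sum_sub_distrib] at this
  linarith

/-- The entropy of a variable with `N` possible values is at most `log₂ N`. -/
theorem partEnt_le_log_card {μ : Ω → ℝ} (h0 : ∀ ω, 0 ≤ μ ω) (h1 : ∑ ω, μ ω = 1)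
    {S : Type*} [Fintype S] [Nonempty S] (X : Ω → S) :
    partEnt μ (Setoid.ker X) ≤ Real.logb 2 (Fintype.card S) := by
  classical
  unfold partEnt Real.logb
  refine div_le_div_of_nonneg_right ?_ (Real.log_nonneg (by norm_num))
  have hN : (0 : ℝ) < Fintype.card S := by exact_mod_cast Fintype.card_pos
  set N : ℝ := (Fintype.card S : ℝ) with hNdef
  have key : ∑ ω, μ ω / cellMass μ (Setoid.ker X) ω ≤ N := by
    rw [← Finset.sum_fiberwise Finset.univ X]
    calc _ ≤ ∑ s : S, (1 : ℝ) := Finset.sum_le_sum fun s _ => by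
            rw [Finset.sum_filter]
            exact sum_cell_div_le _ _ h0 fun a b ha hb => ha.trans hb.symm
      _ = N := by simp [hNdef]
  have pt : ∀ ω, μ ω * (- Real.log (cellMass μ (Setoid.ker X) ω)) ≤
      μ ω * Real.log N + (μ ω / cellMass μ (Setoid.ker X) ω / N - μ ω) := by
    intro ω
    rcases (h0 ω).eq_or_lt with h | h
    · simp [← h]
    · have pa := h.trans_le (le_cellMass h0 (Setoid.ker X) ω)
      have hl := Real.log_le_sub_one_of_pos (inv_pos.2 (mul_pos pa hN))
      rw [Real.log_inv, Real.log_mul pa.ne' hN.ne'] at hl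
      have := mul_le_mul_of_nonneg_left hl h.le
      rw [div_div, div_eq_mul_inv]
      linarith
  have := Finset.sum_le_sum fun ω (_ : ω ∈ Finset.univ) => pt ω
  simp only [Finset.sum_add_distrib, Finset.sum_sub_distrib, ← Finset.sum_mul, ← Finset.sum_div,
    h1, mul_neg, Finset.sum_neg_distrib] at this
  have h2 : (∑ ω, μ ω / cellMass μ (Setoid.ker X) ω) / N ≤ 1 := (div_le_one hN).2 key
  linarith

theorem partEnt_top {μ : Ω → ℝ} (h1 : ∑ ω, μ ω = 1) : partEnt μ ⊤ = 0 := by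
  have : ∀ ω, cellMass μ ⊤ ω = 1 := fun ω => by
    unfold cellMass
    rw [← h1]
    refine Finset.sum_congr rfl fun ω' _ => ?_
    rw [if_pos]
    trivial
  simp [partEnt, this]

/-- Mutual information decreases under coarsening of both variables. -/
theorem mi_mono {μ : Ω → ℝ} (h0 : ∀ ω, 0 ≤ μ ω) (h1 : ∑ ω, μ ω = 1) {a a' b b' : Setoid Ω}
    (ha : a ≤ a') (hb : b ≤ b') :
    partEnt μ a' + partEnt μ b' - partEnt μ (a' ⊓ b') ≤
      partEnt μ a + partEnt μ b - partEnt μ (a ⊓ b) := by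
  have e1 := partEnt_submod h0 h1 (a := a) (b := a' ⊓ b) (c := a') ha inf_le_left
  have e2 := partEnt_submod h0 h1 (a := a' ⊓ b') (b := b) (c := b') inf_le_right hb
  rw [← inf_assoc, inf_eq_left.2 ha] at e1
  rw [inf_assoc, inf_eq_right.2 hb] at e2
  linarith

theorem mi_nonneg {μ : Ω → ℝ} (h0 : ∀ ω, 0 ≤ μ ω) (h1 : ∑ ω, μ ω = 1) (a b : Setoid Ω) :
    partEnt μ (a ⊓ b) ≤ partEnt μ a + partEnt μ b := by
  have := partEnt_submod h0 h1 (a := a) (b := b) (c := ⊤) le_top le_top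
  rw [partEnt_top h1] at this
  linarith

/-- The sum of the conditional entropies `H(Y_i | Y_{B∖i}, c)` is at most `H(Y_B | c)`. -/
theorem sum_erase_le {μ : Ω → ℝ} (h0 : ∀ ω, 0 ≤ μ ω) (h1 : ∑ ω, μ ω = 1)
    {κ : Type*} [DecidableEq κ] {S : κ → Type*} (Y : ∀ k, Ω → S k) (c : Setoid Ω) (B : Finset κ) :
    ∑ i ∈ B, (partEnt μ (jointKer Y B ⊓ c) - partEnt μ (jointKer Y (B.erase i) ⊓ c)) ≤
      partEnt μ (jointKer Y B ⊓ c) - partEnt μ c := by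
  suffices h : ∀ A ⊆ B,
      ∑ i ∈ A, (partEnt μ (jointKer Y B ⊓ c) - partEnt μ (jointKer Y (B.erase i) ⊓ c)) ≤
        partEnt μ (jointKer Y A ⊓ c) - partEnt μ c from h B subset_rfl
  intro A
  induction A using Finset.induction_on with
  | empty =>
    intro _
    have : jointKer Y (∅ : Finset κ) ⊓ c = c := by
      ext a b
      exact ⟨fun h => h.2, fun h => ⟨fun k hk => absurd hk (Finset.notMem_empty k), h⟩⟩
    simp [this]
  | insert i A hi ih =>
    intro hA
    have hA' : A ⊆ B.erase i := fun k hk =>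
      Finset.mem_erase.2 ⟨fun h => hi (h ▸ hk), hA (Finset.mem_insert_of_mem hk)⟩
    have ih' := ih (hA'.trans (Finset.erase_subset _ _))
    rw [Finset.sum_insert hi]
    have e := partEnt_submod h0 h1 (a := jointKer Y (insert i A) ⊓ c)
      (b := jointKer Y (B.erase i) ⊓ c) (c := jointKer Y A ⊓ c)
      (inf_le_inf_right _ (jointKer_anti Y (Finset.subset_insert _ _)))
      (inf_le_inf_right _ (jointKer_anti Y hA'))
    have e2 : jointKer Y (insert i A) ⊓ c ⊓ (jointKer Y (B.erase i) ⊓ c) = jointKer Y B ⊓ c := by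
      rw [← inf_inf_distrib_right, ← jointKer_union]
      congr 2
      rw [Finset.insert_union, Finset.union_eq_right.2 hA',
        Finset.insert_erase (hA (Finset.mem_insert_self _ _))]
    rw [e2] at e
    linarith

end Entropy

/-! ### Averaging over orderings -/

section Averaging

/-- The sum of `g` over the images of `A` under all orderings of the ground set. -/
noncomputable def permSum {u : ℕ} {κ : Type*} (e : Fin u ↪ κ) (g : Finset κ → ℝ)
    (A : Finset (Fin u)) : ℝ :=
  ∑ π : Equiv.Perm (Fin u), g (A.map (π.toEmbedding.trans e))

/-- `permSum` depends only on the size of the set, since permutations act transitively on sets of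
a given size. -/
theorem permSum_congr {u : ℕ} {κ : Type*} (e : Fin u ↪ κ) (g : Finset κ → ℝ)
    {A A' : Finset (Fin u)} (h : A.card = A'.card) : permSum e g A = permSum e g A' := by
  obtain ⟨σ, hσ⟩ : ∃ σ : Equiv.Perm (Fin u), A.map σ.toEmbedding = A' := by
    let f : {x // x ∈ A} ≃ {x // x ∈ A'} := Finset.equivOfCardEq h
    refine ⟨f.extendSubtype, Finset.eq_of_subset_of_card_le (fun x hx => ?_) (by simp [h])⟩
    obtain ⟨y, hy, rfl⟩ := Finset.mem_map.1 hx
    exact f.extendSubtype_mem y hy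
  subst hσ
  unfold permSum
  rw [← Equiv.sum_comp (Equiv.mulRight σ)]
  refine Finset.sum_congr rfl fun π _ => ?_
  rw [Finset.map_map]
  rfl

/-- If every nonempty `B` satisfies `(|B|-1)(ℓ + g B) ≤ ∑ i ∈ B, g (B ∖ i)`, then the average
of `g {k₁} + g {k₂,…,k_u} - g {k₁,…,k_u}` over all orderings is at least
`(1 + 1/2 + ⋯ + 1/(u-1)) ℓ`. -/
theorem average_bound {u : ℕ} (hu : 2 ≤ u) {κ : Type*} [DecidableEq κ] (e : Fin u ↪ κ)
    (g : Finset κ → ℝ) (ℓ : ℝ)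
    (hg : ∀ B : Finset κ, B.Nonempty →
      ((B.card : ℝ) - 1) * (ℓ + g B) ≤ ∑ i ∈ B, g (B.erase i)) (i₀ : Fin u) :
    (u.factorial : ℝ) * ((∑ i ∈ Finset.range (u - 1), 1 / ((i : ℝ) + 1)) * ℓ) ≤
      ∑ π : Equiv.Perm (Fin u), (g (({i₀} : Finset (Fin u)).map (π.toEmbedding.trans e)) +
        g ((Finset.univ.erase i₀).map (π.toEmbedding.trans e)) -
        g (Finset.univ.map (π.toEmbedding.trans e))) := by
  classical
  -- `a m` is the common value of `permSum e g` on the sets of size `m`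
  let T : ℕ → Finset (Fin u) := fun m => Finset.univ.filter fun j => j.1 < m
  have hT : ∀ m ≤ u, (T m).card = m := fun m hm => by
    simp only [T]
    rw [Fin.card_filter_val_lt]
    exact min_eq_right hm
  let a : ℕ → ℝ := fun m => permSum e g (T m)
  have ha : ∀ A : Finset (Fin u), permSum e g A = a A.card := fun A =>
    permSum_congr e g (hT _ (by simpa using A.card_le_univ)).symm
  set N : ℝ := (u.factorial : ℝ) with hN
  have step : ∀ m, m + 1 ≤ u → (m : ℝ) * (N * ℓ + a (m + 1)) ≤ (m + 1 : ℝ) * a m := by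
    intro m hm
    have hc := hT _ hm
    have h1 : ∑ i ∈ T (m + 1), permSum e g ((T (m + 1)).erase i) = (m + 1 : ℝ) * a m := by
      rw [Finset.sum_congr rfl fun i hi => by
        rw [ha, Finset.card_erase_of_mem hi, hc, Nat.add_sub_cancel]]
      rw [Finset.sum_const, hc, nsmul_eq_mul]
      push_cast
      ring
    rw [← h1]
    unfold permSum
    rw [Finset.sum_comm]
    have h2 : (m : ℝ) * (N * ℓ + a (m + 1)) = ∑ π : Equiv.Perm (Fin u),
        (m : ℝ) * (ℓ + g ((T (m + 1)).map (π.toEmbedding.trans e))) := by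
      rw [← Finset.mul_sum, Finset.sum_add_distrib, Finset.sum_const, Finset.card_univ,
        Fintype.card_perm, Fintype.card_fin, nsmul_eq_mul]
      rfl
    rw [h2]
    refine Finset.sum_le_sum fun π _ => ?_
    have h3 := hg ((T (m + 1)).map (π.toEmbedding.trans e))
      (Finset.card_pos.1 (by rw [Finset.card_map, hc]; omega))
    rw [Finset.card_map, hc, Finset.sum_map] at h3
    simp only [← Finset.map_erase] at h3
    push_cast at h3
    rwa [add_sub_cancel_right] at h3
  -- telescoping the recursion `a m / m - a (m+1) / (m+1) ≥ N ℓ / (m+1)`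
  have tele : ∀ m, m + 1 ≤ u → a (m + 1) / (m + 1 : ℝ) +
      N * ℓ * ((∑ i ∈ Finset.range (m + 1), 1 / ((i : ℝ) + 1)) - 1) ≤ a 1 := by
    intro m
    induction m with
    | zero => intro _; simp
    | succ m ih =>
      intro hm
      have h1 := ih (by omega)
      have h2 := step (m + 1) hm
      rw [Finset.sum_range_succ]
      push_cast at h2 ⊢
      have p1 : (0 : ℝ) < m + 1 := by positivity
      have p2 : (0 : ℝ) < m + 1 + 1 := by positivity
      have h3 : a (m + 1 + 1) / (m + 1 + 1 : ℝ) + N * ℓ * (1 / (m + 1 + 1 : ℝ)) ≤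
          a (m + 1) / (m + 1 : ℝ) := by
        rw [← mul_div_assoc, mul_one, ← add_div, div_le_div_iff₀ p2 p1]
        linarith
      linarith
  obtain ⟨m, rfl⟩ : ∃ m, u = m + 1 + 1 := ⟨u - 2, by omega⟩
  have h1 := tele (m + 1) le_rfl
  have h2 := step (m + 1) le_rfl
  rw [Finset.sum_sub_distrib, Finset.sum_add_distrib]
  have e1 := ha {i₀}
  have e2 := ha (Finset.univ.erase i₀)
  have e3 := ha Finset.univ
  rw [Finset.card_singleton] at e1
  rw [Finset.card_erase_of_mem (Finset.mem_univ _), Finset.card_univ, Fintype.card_fin] at e2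
  rw [Finset.card_univ, Fintype.card_fin] at e3
  unfold permSum at e1 e2 e3
  rw [e1, e2, e3]
  simp only [Nat.add_sub_cancel]
  rw [Finset.sum_range_succ] at h1
  set H := ∑ i ∈ Finset.range (m + 1), 1 / ((i : ℝ) + 1)
  push_cast at h1 h2
  have p2 : (0 : ℝ) < m + 1 + 1 := by positivity
  have h3 : N * ℓ + a (m + 1 + 1) ≤ a (m + 1) + a (m + 1 + 1) / (m + 1 + 1 : ℝ) +
      N * ℓ * (1 / (m + 1 + 1 : ℝ)) := by
    rw [← mul_div_assoc, mul_one, add_assoc (a (m + 1)), ← add_div, ← sub_le_iff_le_add', le_div_iff₀ p2]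
    linarith
  linarith

end Averaging

/-! ### Dual total correlation of the keys -/

section KeyBound

/-- The dual total correlation `H(Z_B) - ∑ H(Z_i | Z_{B∖i})` of the keys is at least `(|B|-1) ℓ`,
where `ℓ` is the entropy of one input. Here `s` is the partition generated by the sum of the
inputs, and the last two hypotheses are correctness and security for the set `B`. -/
theorem key_bound {Ω : Type*} [Fintype Ω] {μ : Ω → ℝ} (h0 : ∀ ω, 0 ≤ μ ω) (h1 : ∑ ω, μ ω = 1)
    {κ : Type*} [DecidableEq κ] {SW SZ SX : κ → Type*} (B : Finset κ)
    (W : ∀ k, Ω → SW k) (Z : ∀ k, Ω → SZ k) (X : ∀ k, Ω → SX k) (s : Setoid Ω) (ℓ : ℝ)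
    (hW : ∀ A, partEnt μ (jointKer W A) = A.card * ℓ)
    (hWZ : ∀ A, partEnt μ (jointKer W A ⊓ jointKer Z A) = A.card * ℓ + partEnt μ (jointKer Z A))
    (hX : ∀ k ∈ B, ∀ a b, W k a = W k b → Z k a = Z k b → X k a = X k b)
    (hs : partEnt μ s ≤ ℓ)
    (hws : ∀ i ∈ B, jointKer W (B.erase i) ⊓ s ≤ jointKer W B)
    (hcorr : partEnt μ (s ⊓ jointKer X B) = partEnt μ (jointKer X B))
    (hsec : partEnt μ (jointKer W B ⊓ jointKer X B) =
      partEnt μ (jointKer W B) - partEnt μ s + partEnt μ (jointKer X B)) :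
    ((B.card : ℝ) - 1) * (ℓ + partEnt μ (jointKer Z B)) ≤
      ∑ i ∈ B, partEnt μ (jointKer Z (B.erase i)) := by
  have hdet : ∀ A ⊆ B, jointKer W A ⊓ jointKer Z A ≤ jointKer X A := fun A hA a b hab k hk =>
    hX k (hA hk) a b (hab.1 k hk) (hab.2 k hk)
  set c := jointKer W B ⊓ jointKer X B with hc
  have hZc : partEnt μ (jointKer Z B ⊓ c) = B.card * ℓ + partEnt μ (jointKer Z B) := by
    rw [← hWZ B]
    congr 1
    refine le_antisymm (le_inf (inf_le_right.trans inf_le_left) inf_le_left) ?_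
    exact le_inf inf_le_right (le_inf inf_le_left (hdet B subset_rfl))
  have hZ := sum_erase_le h0 h1 Z c B
  have hXs := sum_erase_le h0 h1 X ⊤ B
  simp only [inf_top_eq, partEnt_top h1, sub_zero] at hXs
  have main : ∀ i ∈ B, partEnt μ (jointKer Z (B.erase i) ⊓ c) ≤
      ((B.card : ℝ) - 1) * ℓ + partEnt μ (jointKer Z (B.erase i)) + partEnt μ (jointKer X B)
        - partEnt μ (jointKer X (B.erase i)) := by
    intro i hi
    -- everything known to the users other than `i`
    set y := jointKer W (B.erase i) ⊓ jointKer Z (B.erase i) with hy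
    have hyE := hWZ (B.erase i)
    rw [Finset.card_erase_of_mem hi, Nat.cast_sub (Finset.card_pos.2 ⟨i, hi⟩), Nat.cast_one,
      ← hy] at hyE
    have hyX : y ≤ jointKer X (B.erase i) := hdet _ (Finset.erase_subset _ _)
    have e1 := partEnt_submod h0 h1 (a := y) (b := jointKer X B) hyX
      (jointKer_anti X (Finset.erase_subset i B))
    -- by correctness, adding the sum to the messages costs nothing
    have e2 := partEnt_submod h0 h1 (a := y ⊓ jointKer X B) (b := s ⊓ jointKer X B)
      (c := jointKer X B) inf_le_right inf_le_right
    have e3 : partEnt μ (jointKer Z (B.erase i) ⊓ c) ≤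
        partEnt μ (y ⊓ jointKer X B ⊓ (s ⊓ jointKer X B)) := by
      refine partEnt_anti h0 (le_inf ?_ (le_inf ?_ ?_))
      · exact inf_le_left.trans (inf_le_left.trans inf_le_right)
      · exact le_trans (le_inf (inf_le_left.trans (inf_le_left.trans inf_le_left))
          (inf_le_right.trans inf_le_left)) (hws i hi)
      · exact inf_le_left.trans inf_le_right
    linarith
  have hsum := Finset.sum_le_sum main
  simp only [Finset.sum_add_distrib, Finset.sum_sub_distrib, Finset.sum_const, nsmul_eq_mul,
    hZc, hW B] at hsum hZ hXs hsec
  linarith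

end KeyBound

/-! ### Entropies of the inputs, keys and messages -/

section Assembly

variable {Ω : Type*}

theorem ker_pair {S T : Type*} (X : Ω → S) (Y : Ω → T) :
    Setoid.ker (fun ω => (X ω, Y ω)) = Setoid.ker X ⊓ Setoid.ker Y := by
  ext a b
  simp [Setoid.ker_def, Setoid.inf_def]

theorem ker_subtype {κ : Type*} {S : κ → Type*} (Y : ∀ k, Ω → S k) (B : Finset κ) :
    Setoid.ker (fun ω (k : ↥B) => Y k.1 ω) = jointKer Y B := by
  ext a b
  simp [Setoid.ker_def, jointKer_rel, funext_iff]

theorem ker_univ {κ : Type*} [Fintype κ] {S : κ → Type*} (Y : ∀ k, Ω → S k) :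
    Setoid.ker (fun ω (k : κ) => Y k ω) = jointKer Y Finset.univ := by
  ext a b
  simp [Setoid.ker_def, jointKer_rel, funext_iff]

variable [Fintype Ω]

/-- Independence of `X` and `Y` makes entropy additive. -/
theorem partEnt_indep {μ : Ω → ℝ} (h0 : ∀ ω, 0 ≤ μ ω) {S T : Type*} (X : Ω → S) (Y : Ω → T)
    (h : ∀ s t, probOf μ (fun ω => (X ω, Y ω)) (s, t) = probOf μ X s * probOf μ Y t) :
    partEnt μ (Setoid.ker X ⊓ Setoid.ker Y) =
      partEnt μ (Setoid.ker X) + partEnt μ (Setoid.ker Y) := by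
  unfold partEnt
  rw [← add_div, ← neg_add, ← Finset.sum_add_distrib]
  congr 2
  refine Finset.sum_congr rfl fun ω _ => ?_
  rcases (h0 ω).eq_or_lt with h1 | h1
  · simp [← h1]
  · have pX := h1.trans_le (le_cellMass h0 (Setoid.ker X) ω)
    have pY := h1.trans_le (le_cellMass h0 (Setoid.ker Y) ω)
    rw [← mul_add, ← Real.log_mul pX.ne' pY.ne', ← ker_pair]
    simp only [cellMass_ker, h]

/-- If the variables take values in a set of size `q ^ L` and are jointly uniform, then every
subfamily `A` has entropy `|A| L log₂ q`: this is the maximal value, and falling short of it on `A`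
would contradict the total `K L log₂ q` by subadditivity. -/
theorem partEnt_inputs {μ : Ω → ℝ} (h0 : ∀ ω, 0 ≤ μ ω) (h1 : ∑ ω, μ ω = 1) {K L q : ℕ}
    {S : Type*} [Fintype S] [Nonempty S] (hS : Fintype.card S = q ^ L)
    (W : Fin K → Ω → S)
    (hW : ∀ w : Fin K → S, probOf μ (fun ω (k : Fin K) => W k ω) w = ((q : ℝ) ^ (L * K))⁻¹)
    (A : Finset (Fin K)) :
    partEnt μ (jointKer W A) = A.card * ((L : ℝ) * Real.logb 2 q) := by
  have ub : ∀ A : Finset (Fin K),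
      partEnt μ (jointKer W A) ≤ A.card * ((L : ℝ) * Real.logb 2 q) := by
    intro A
    rw [← ker_subtype]
    refine (partEnt_le_log_card h0 h1 _).trans_eq ?_
    simp [hS, Real.logb_pow]
  have tot : partEnt μ (jointKer W Finset.univ) = K * ((L : ℝ) * Real.logb 2 q) := by
    rw [← ker_univ]
    unfold partEnt
    simp only [cellMass_ker, hW]
    rw [← Finset.sum_mul, h1, Real.log_inv, Real.log_pow, Real.logb]
    push_cast
    ring
  have e := mi_nonneg h0 h1 (jointKer W A) (jointKer W Aᶜ)
  rw [← jointKer_union, Finset.union_compl, tot] at e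
  have hc : (A.card : ℝ) + (Aᶜ.card : ℝ) = K := by
    have := A.card_add_card_compl
    rw [Fintype.card_fin] at this
    exact_mod_cast this
  have u1 := ub A
  have u2 := ub Aᶜ
  rw [← hc] at e
  linarith

end Assembly

/-- Lemma 5 of the paper: in K-user secure summation with user selection, for a selected
set U = {k_1,…,k_{|U|}} with |U| ≥ 2,
(1/|U|!)·Σ_{π∈S_{|U|}} I(Z_{k_{π(1)}}; (Z_{k_{π(j)}})_{j∈{2,…,|U|}})
  ≥ (1 + 1/2 + ⋯ + 1/(|U|−1))·L·log₂ q. -/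
theorem secure_summation_mi_permutation_bound
    (K L q : ℕ) (hK : 1 ≤ K) (hL : 1 ≤ L) (hq : IsPrimePow q)
    (F : Type) [Field F] [Fintype F] (hF : Fintype.card F = q)
    (Ω : Type) [Fintype Ω] (μ : Ω → ℝ)
    (hμ0 : ∀ ω, 0 ≤ μ ω) (hμ1 : (∑ ω, μ ω) = 1)
    (SZ : Fin K → Type) [∀ k, Fintype (SZ k)]
    (M : Finset (Fin K) → Fin K → Type) [∀ U k, Fintype (M U k)]
    (W : Fin K → Ω → (Fin L → F)) (Z : ∀ k : Fin K, Ω → SZ k)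
    (X : ∀ (U : Finset (Fin K)) (k : Fin K), Ω → M U k)
    -- the inputs W_1, …, W_K are i.i.d. uniform over F_q^L
    (hWunif : ∀ w : Fin K → Fin L → F,
      probOf μ (fun ω (k : Fin K) => W k ω) w = ((q : ℝ) ^ (L * K))⁻¹)
    -- (W_1,…,W_K) is independent of (Z_1,…,Z_K)
    (hWZind : ∀ (w : Fin K → Fin L → F) (z : ∀ k : Fin K, SZ k),
      probOf μ (fun ω => ((fun k : Fin K => W k ω), (fun k : Fin K => Z k ω))) (w, z)
        = probOf μ (fun ω (k : Fin K) => W k ω) w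
            * probOf μ (fun ω (k : Fin K) => Z k ω) z)
    -- each message X_k^U is a deterministic function of (W_k, Z_k)
    (hXdet : ∀ (U : Finset (Fin K)) (k : Fin K), k ∈ U →
      ∃ f : (Fin L → F) → SZ k → M U k, ∀ ω, X U k ω = f (W k ω) (Z k ω))
    -- correctness: H(Σ_{k∈U} W_k | (X_k^U)_{k∈U}) = 0
    (hcorr : ∀ U : Finset (Fin K),
      Hcond μ (fun ω => ∑ k ∈ U, W k ω) (fun ω (k : ↥U) => X U k.1 ω) = 0)
    -- security: I((W_k)_{k∈U}; (X_k^U)_{k∈U} | Σ_{k∈U} W_k) = 0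
    (hsec : ∀ U : Finset (Fin K),
      CMI μ (fun ω (k : ↥U) => W k.1 ω) (fun ω (k : ↥U) => X U k.1 ω)
        (fun ω => ∑ k ∈ U, W k ω) = 0) :
    ∀ (u : ℕ) (hu : 2 ≤ u) (idx : Fin u → Fin K),
      Function.Injective idx →
      (1 / (u.factorial : ℝ)) *
        ∑ π : Equiv.Perm (Fin u),
          MI μ (Z (idx (π ⟨0, by omega⟩)))
            (fun ω (j : {j : Fin u // j.1 ≠ 0}) => Z (idx (π j.1)) ω)
      ≥ (∑ i ∈ Finset.range (u - 1), 1 / ((i : ℝ) + 1)) * ((L : ℝ) * Real.logb 2 q) := by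
  intro u hu idx hidx
  have hcardW : Fintype.card (Fin L → F) = q ^ L := by simp [hF]
  set ℓ : ℝ := (L : ℝ) * Real.logb 2 q with hℓ
  have hW : ∀ A, partEnt μ (jointKer W A) = A.card * ℓ :=
    partEnt_inputs hμ0 hμ1 hcardW W hWunif
  have hind := partEnt_indep hμ0 _ _ hWZind
  rw [ker_univ, ker_univ] at hind
  have hWZ : ∀ A, partEnt μ (jointKer W A ⊓ jointKer Z A) =
      A.card * ℓ + partEnt μ (jointKer Z A) := by
    intro A
    -- independence of the full families passes to subfamilies
    have e1 := mi_mono hμ0 hμ1 (jointKer_anti W A.subset_univ) (jointKer_anti Z A.subset_univ)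
    have e2 := mi_nonneg hμ0 hμ1 (jointKer W A) (jointKer Z A)
    rw [hW A] at e1 e2
    linarith
  have hkey : ∀ B : Finset (Fin K), B.Nonempty →
      ((B.card : ℝ) - 1) * (ℓ + partEnt μ (jointKer Z B)) ≤
        ∑ i ∈ B, partEnt μ (jointKer Z (B.erase i)) := by
    intro B _
    have hsW : jointKer W B ≤ Setoid.ker (fun ω => ∑ k ∈ B, W k ω) := fun a b hab =>
      Finset.sum_congr rfl hab
    have hc := hcorr B
    have hsc := hsec B
    unfold CMI at hsc
    unfold Hcond at hc hsc
    simp only [Hent_eq_partEnt, ker_pair, ker_subtype] at hc hsc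
    refine key_bound hμ0 hμ1 B W Z (X B) (Setoid.ker fun ω => ∑ k ∈ B, W k ω) ℓ hW hWZ
      ?_ ?_ ?_ ?_ ?_
    · intro k hk a b hw hz
      obtain ⟨f, hf⟩ := hXdet B k hk
      rw [hf, hf, hw, hz]
    · refine (partEnt_le_log_card hμ0 hμ1 _).trans_eq ?_
      rw [hcardW, Nat.cast_pow, Real.logb_pow]
    · intro i hi a b hab k hk
      by_cases hki : k = i
      -- the remaining input is the sum minus the other inputs
      · subst hki
        have h1 : ∑ k ∈ B, W k a = ∑ k ∈ B, W k b := hab.2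
        rw [← Finset.add_sum_erase _ _ hi, ← Finset.add_sum_erase _ _ hi,
          Finset.sum_congr rfl hab.1] at h1
        exact add_right_cancel h1
      · exact hab.1 k (Finset.mem_erase.2 ⟨hki, hk⟩)
    · linarith
    · rw [inf_eq_left.2 hsW, inf_comm (jointKer (X B) B), ← inf_assoc,
        inf_eq_left.2 hsW, inf_comm _ (jointKer (X B) B), inf_comm (jointKer (X B) B)] at hsc
      linarith
  have havg := average_bound hu ⟨idx, hidx⟩ (fun B => partEnt μ (jointKer Z B)) ℓ hkey
    ⟨0, by omega⟩
  have hMI : ∀ π : Equiv.Perm (Fin u), MI μ (Z (idx (π ⟨0, by omega⟩)))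
      (fun ω (j : {j : Fin u // j.1 ≠ 0}) => Z (idx (π j.1)) ω) =
      partEnt μ (jointKer Z (({⟨0, by omega⟩} : Finset (Fin u)).map
        (π.toEmbedding.trans ⟨idx, hidx⟩))) +
      partEnt μ (jointKer Z ((Finset.univ.erase ⟨0, by omega⟩).map
        (π.toEmbedding.trans ⟨idx, hidx⟩))) -
      partEnt μ (jointKer Z (Finset.univ.map (π.toEmbedding.trans ⟨idx, hidx⟩))) := by
    intro π
    unfold MI
    simp only [Hent_eq_partEnt, ker_pair]
    have k1 : Setoid.ker (Z (idx (π ⟨0, by omega⟩))) =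
        jointKer Z (({⟨0, by omega⟩} : Finset (Fin u)).map
          (π.toEmbedding.trans ⟨idx, hidx⟩)) := by
      ext a b
      simp [Setoid.ker_def, jointKer_rel]
    have k2 : Setoid.ker (fun ω (j : {j : Fin u // j.1 ≠ 0}) => Z (idx (π j.1)) ω) =
        jointKer Z ((Finset.univ.erase ⟨0, by omega⟩).map
          (π.toEmbedding.trans ⟨idx, hidx⟩)) := by
      ext a b
      rw [jointKer_rel, Finset.forall_mem_map, Setoid.ker_def, funext_iff]
      simp [Fin.ext_iff]
    rw [k1, k2, ← jointKer_union, ← Finset.map_union]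
    congr 4
    rw [← Finset.insert_eq, Finset.insert_erase (Finset.mem_univ _)]
  simp only [hMI]
  rw [ge_iff_le, one_div, ← div_eq_inv_mul, le_div_iff₀ (by positivity), mul_comm]
  exact havg
end
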